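/- arXiv:2510.18451 — 7 statements merged into one kernel-verified Lean document; each statement's English description precedes it below -/
import Mathlib

section
/- Let Ψ : (0,∞) → (0,∞) and ω : (0,∞) → (0,1) be such that lim_{q→∞} q²Ψ(q) = 0, lim_{q→∞} ω(q) = 0, and the map q ↦ q²Ψ(q) is non-increasing on (0,∞). Suppose furthermore that ω(q) ≥ (45/Ψ(q)) · Ψ(1/(2qΨ(q))) for all sufficiently large q. Then the set E(Ψ,ω) is uncountable. -/
/-!
The set is shown to escape every sequence `z₀, z₁, …` of reals: a point of `E(Ψ, ω)` is built that
differs from all `zₙ`, as the common point of nested intervals `Iₙ`, where `Iₙ` is one of the two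
components of `{x : (1 - ω(qₙ)) Ψ(qₙ) ≤ |x - pₙ/qₙ| ≤ Ψ(qₙ)}` (`IsStage`).

Let `I` be the interval attached to `p/q` and put `Q = 1/(2qΨ(q))`. A rational `u/r ≠ p/q` with
`q ≤ r ≤ Q` is at distance at least `1/(rq) ≥ 2Ψ(q)` from `p/q`, hence automatically far from all
of `I` (`stage_small_den`). The hypothesis on `ω` says that `I` has length at least `45 Ψ(Q)`.
Inside an interval of length `H` comparable to `Ψ(Q)` there is a point `y` with
`|y - u/r| ≥ H/8` when `2Hr² < 1` and `|y - u/r| ≥ 1/(64r²)` otherwise (`exists_badly_approx`):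
repeatedly pass to a subinterval of a quarter of the length, avoiding the at most one rational of
suitably small denominator nearby. So `y` is badly approximable, and it stays away from all the
balls `B(u/r, Ψ(r))` with `r ≥ Q`.

By Dirichlet's theorem `y` has a reduced approximation `p₁/q₁` with `|y - p₁/q₁| ≤ 1/q₁²` and `q₁`
as large as desired. Every `x` with `|x - p₁/q₁| ≤ Ψ(q₁)` is then in `I` and still avoids the balls
`B(u/r, Ψ(r))` for `Q ≤ r < q₁`: for `r ≤ q₁/20` since it is close to `y`, for `r > q₁/20` since
distinct rationals repel each other (`exists_next_center`). The next interval is the component at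
`p₁/q₁`, to its left or to its right, that misses the current `zₙ`.
-/

open Filter Set

/-- A real number `x` is `Ψ`-approximable: `|x - p/q| ≤ Ψ q` for infinitely many
pairs `(p, q) ∈ ℤ × ℕ` (with `q > 0`).  `WSet Ψ` is the set `W(Ψ)` of such `x`. -/
def WSet (Ψ : ℝ → ℝ) : Set ℝ :=
  {x : ℝ | {pq : ℤ × ℕ | 0 < pq.2 ∧ |x - (pq.1 : ℝ) / (pq.2 : ℝ)| ≤ Ψ (pq.2 : ℝ)}.Infinite}

/-- `ESet Ψ ω` is the set `E(Ψ, ω)` of `x ∈ W(Ψ)` such that for all sufficiently large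
`q ∈ ℕ` one has `|x - p/q| ≥ (1 - ω q) * Ψ q` for every `p ∈ ℤ`. -/
def ESet (Ψ ω : ℝ → ℝ) : Set ℝ :=
  {x : ℝ | x ∈ WSet Ψ ∧ ∃ Q : ℕ, ∀ q : ℕ, Q ≤ q → ∀ p : ℤ,
    (1 - ω (q : ℝ)) * Ψ (q : ℝ) ≤ |x - (p : ℝ) / (q : ℝ)|}

/-! ### Badly approximable points in a given interval -/

lemma one_div_le_abs_sub_of_ne (u v : ℤ) (r s : ℕ) (hr : 0 < r) (hs : 0 < s)
    (h : (u : ℝ) / r ≠ (v : ℝ) / s) : 1 / ((r : ℝ) * s) ≤ |(u : ℝ) / r - (v : ℝ) / s| := by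
  have hr' : (0 : ℝ) < r := by exact_mod_cast hr
  have hs' : (0 : ℝ) < s := by exact_mod_cast hs
  have e : (u : ℝ) / r - (v : ℝ) / s = ((u * s - r * v : ℤ) : ℝ) / (r * s) := by
    push_cast
    field_simp
  have hne : (u * s - r * v : ℤ) ≠ 0 := by
    intro h0
    apply h
    rw [← sub_eq_zero, e, h0]
    simp
  have h1 : (1 : ℝ) ≤ |((u * s - r * v : ℤ) : ℝ)| := by
    rw [← Int.cast_abs]
    exact_mod_cast Int.one_le_abs hne
  rw [e, abs_div, abs_of_pos (mul_pos hr' hs')]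
  gcongr

/-- Rationals of denominator `r < 1/√(2ℓ)` are more than `2ℓ` apart, so at most one of them is near
an interval of length `ℓ`; either the leftmost or the rightmost quarter is far from it. -/
lemma exists_quarter (c l : ℝ) (hl : 0 < l) :
    ∃ c', c ≤ c' ∧ c' + l / 4 ≤ c + l ∧ ∀ x, c' ≤ x → x ≤ c' + l / 4 →
      ∀ (r : ℕ) (u : ℤ), 0 < r → 2 * l * (r : ℝ) ^ 2 < 1 → l / 8 ≤ |x - (u : ℝ) / r| := by
  by_cases hex : ∃ (r : ℕ) (u : ℤ), 0 < r ∧ 2 * l * (r : ℝ) ^ 2 < 1 ∧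
      c - l / 8 < (u : ℝ) / r ∧ (u : ℝ) / r < c + l + l / 8
  · obtain ⟨s, v, hs, hsl, hv1, hv2⟩ := hex
    have key : ∀ x, c ≤ x → x ≤ c + l → l / 8 ≤ |x - (v : ℝ) / s| →
        ∀ (r : ℕ) (u : ℤ), 0 < r → 2 * l * (r : ℝ) ^ 2 < 1 → l / 8 ≤ |x - (u : ℝ) / r| := by
      intro x hx1 hx2 hx r u hr hrl
      by_cases he : (u : ℝ) / r = (v : ℝ) / s
      · rw [he]; exact hx
      by_contra! hlt
      rw [abs_lt] at hlt
      have h1 := one_div_le_abs_sub_of_ne u v r s hr hs he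
      have hr' : (0 : ℝ) < r := by exact_mod_cast hr
      have hs' : (0 : ℝ) < s := by exact_mod_cast hs
      have h2 : 2 * l < 1 / ((r : ℝ) * s) := by
        rw [lt_div_iff₀ (by positivity)]
        nlinarith [mul_nonneg hl.le (sq_nonneg ((r : ℝ) - s))]
      have h3 : |(u : ℝ) / r - (v : ℝ) / s| < 2 * l := by
        rw [abs_lt]
        constructor <;> linarith
      linarith
    by_cases hm : (v : ℝ) / s ≤ c + l / 2
    · refine ⟨c + 3 * l / 4, by linarith, by linarith, fun x h1 h2 => ?_⟩
      refine key x (by linarith) (by linarith) ?_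
      exact le_trans (by linarith) (le_abs_self _)
    · refine ⟨c, le_rfl, by linarith, fun x h1 h2 => ?_⟩
      refine key x (by linarith) (by linarith) ?_
      exact le_trans (by linarith) (neg_le_abs _)
  · push Not at hex
    refine ⟨c, le_rfl, by linarith, fun x h1 h2 r u hr hrl => ?_⟩
    by_contra! hlt
    rw [abs_lt] at hlt
    have := hex r u hr hrl (by linarith)
    linarith

/-- A point that is badly approximable, with a constant not depending on the interval, at the
denominators `r ≥ 1/√(2H)`, and far (relative to `H`) from the rationals of smaller denominator. -/
lemma exists_badly_approx (c H : ℝ) (hH : 0 < H) :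
    ∃ y, c ≤ y ∧ y ≤ c + H ∧ ∀ (r : ℕ) (u : ℤ), 0 < r →
      (2 * H * (r : ℝ) ^ 2 < 1 → H / 8 ≤ |y - (u : ℝ) / r|) ∧
      (1 ≤ 2 * H * (r : ℝ) ^ 2 → 1 / (64 * (r : ℝ) ^ 2) ≤ |y - (u : ℝ) / r|) := by
  have hpos : ∀ k : ℕ, 0 < H / 4 ^ k := fun k => by positivity
  choose f hf1 hf2 hf3 using fun (c : ℝ) (k : ℕ) => exists_quarter c (H / 4 ^ k) (hpos k)
  let g : ℕ → ℝ := fun k => Nat.rec c (fun k x => f x k) k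
  have hg : ∀ k, g (k + 1) = f (g k) k := fun k => rfl
  have hq : ∀ k : ℕ, H / 4 ^ (k + 1) = H / 4 ^ k / 4 := fun k => by rw [pow_succ]; field_simp
  have hanti : Antitone fun k => Icc (g k) (g k + H / 4 ^ k) := by
    refine antitone_nat_of_succ_le fun k => ?_
    apply Icc_subset_Icc
    · rw [hg]; exact hf1 _ _
    · rw [hg, hq]; exact hf2 _ _
  have hmem := ciSup_mem_iInter_Icc_of_antitone_Icc hanti (fun k => by linarith [hpos k])
  rw [mem_iInter] at hmem
  set y := ⨆ k, g k
  have hfar : ∀ (k : ℕ) (r : ℕ) (u : ℤ), 0 < r → 2 * (H / 4 ^ k) * (r : ℝ) ^ 2 < 1 →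
      H / 4 ^ k / 8 ≤ |y - (u : ℝ) / r| := by
    intro k
    have h := hmem (k + 1)
    rw [hg, hq] at h
    exact hf3 (g k) k y h.1 h.2
  have h0 : c ≤ y ∧ y ≤ c + H / 4 ^ 0 := hmem 0
  refine ⟨y, h0.1, by simpa using h0.2, fun r u hr => ⟨fun h => ?_, fun h => ?_⟩⟩
  · simpa using hfar 0 r u hr (by simpa using h)
  · have hr' : (0 : ℝ) < r := by exact_mod_cast hr
    have hex : ∃ k : ℕ, 2 * (H / 4 ^ k) * (r : ℝ) ^ 2 < 1 := by
      obtain ⟨k, hk⟩ := pow_unbounded_of_one_lt (2 * H * (r : ℝ) ^ 2) (by norm_num : (1 : ℝ) < 4)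
      refine ⟨k, ?_⟩
      have : 2 * (H / 4 ^ k) * (r : ℝ) ^ 2 = 2 * H * (r : ℝ) ^ 2 / 4 ^ k := by ring
      rw [this, div_lt_one (by positivity)]
      exact hk
    classical
    -- The first scale at which `r` is small is comparable to `1/r²`.
    obtain ⟨k, hk, hmin⟩ : ∃ k : ℕ, 2 * (H / 4 ^ k) * (r : ℝ) ^ 2 < 1 ∧
        ∀ j < k, ¬ 2 * (H / 4 ^ j) * (r : ℝ) ^ 2 < 1 :=
      ⟨Nat.find hex, Nat.find_spec hex, fun j hj => Nat.find_min hex hj⟩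
    rcases k with _ | k
    · simp at hk
      linarith
    · have h1 := hfar (k + 1) r u hr hk
      have h2 := hmin k (Nat.lt_succ_self k)
      rw [hq] at h1
      refine le_trans ?_ h1
      rw [div_le_iff₀ (by positivity)]
      linarith

/-! ### The inductive step -/

/-- Dirichlet's theorem for a badly approximable `y`: the denominator can be taken large. -/
lemma exists_dirichlet_large (y H : ℝ) (hH : 0 < H)
    (hy : ∀ (r : ℕ) (u : ℤ), 0 < r →
      (2 * H * (r : ℝ) ^ 2 < 1 → H / 8 ≤ |y - (u : ℝ) / r|) ∧
      (1 ≤ 2 * H * (r : ℝ) ^ 2 → 1 / (64 * (r : ℝ) ^ 2) ≤ |y - (u : ℝ) / r|)) (N : ℕ) :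
    ∃ (p : ℤ) (q : ℕ), N ≤ q ∧ 0 < q ∧ p.natAbs.Coprime q ∧
      |y - (p : ℝ) / q| ≤ 1 / (q : ℝ) ^ 2 := by
  obtain ⟨M, hM⟩ := exists_nat_gt (8 / H)
  have hn : 0 < M + 64 * N + 1 := by omega
  obtain ⟨t, ht1, ht2⟩ := Real.exists_rat_abs_sub_le_and_den_le y hn
  have hd : (1 : ℝ) ≤ t.den := by exact_mod_cast t.den_pos
  have ht2' : (t.den : ℝ) ≤ ((M + 64 * N + 1 : ℕ) : ℝ) := by exact_mod_cast ht2
  have hN0 : (0 : ℝ) ≤ N := Nat.cast_nonneg _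
  have hM0 : (0 : ℝ) ≤ M := Nat.cast_nonneg _
  have hcast : (t : ℝ) = (t.num : ℝ) / t.den := by exact_mod_cast (Rat.num_div_den t).symm
  rw [hcast] at ht1
  push_cast at ht1 ht2'
  refine ⟨t.num, t.den, ?_, t.den_pos, t.reduced, ?_⟩
  · obtain ⟨h1, h2⟩ := hy t.den t.num t.den_pos
    rcases lt_or_ge (2 * H * (t.den : ℝ) ^ 2) 1 with h | h
    · exfalso
      have h3 := (h1 h).trans ht1
      rw [le_div_iff₀ (by positivity)] at h3
      rw [div_lt_iff₀ hH] at hM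
      have h4 : (M : ℝ) ≤ ((M : ℝ) + 64 * N + 1 + 1) * t.den := by nlinarith
      nlinarith
    · have h3 := (h2 h).trans ht1
      rw [div_le_div_iff₀ (by positivity) (by positivity)] at h3
      have h4 : (M : ℝ) + 64 * N + 1 + 1 ≤ 64 * t.den := by
        have : ((M : ℝ) + 64 * N + 1 + 1) * t.den ≤ (64 * t.den) * t.den := by nlinarith
        exact le_of_mul_le_mul_right this (by linarith)
      have h5 : (N : ℝ) ≤ t.den := by linarith
      exact_mod_cast h5
  · refine ht1.trans ?_
    rw [sq]
    gcongr
    linarith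

lemma Psi_le_of_le {Ψ : ℝ → ℝ} (hΨpos : ∀ q : ℝ, 0 < q → 0 < Ψ q)
    (hmono : AntitoneOn (fun q : ℝ => q ^ 2 * Ψ q) (Set.Ioi 0)) {a b : ℝ} (ha : 0 < a)
    (hab : a ≤ b) : Ψ b ≤ Ψ a := by
  have h := hmono (mem_Ioi.2 ha) (mem_Ioi.2 (ha.trans_le hab)) hab
  simp only at h
  have hb := hΨpos b (ha.trans_le hab)
  have h2 : a ^ 2 * Ψ b ≤ b ^ 2 * Ψ b := by gcongr
  exact le_of_mul_le_mul_left (h2.trans h) (by positivity)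

/-- If `r²Ψ(r) ≤ 1/1000` for `r ≥ Q`, an interval of length `45 Ψ(Q)` contains, for some reduced
`p/q` with `q` large, the closed ball of radius `Ψ(q)` around `p/q`, and this ball is disjoint from
the open balls of radius `Ψ(r)` around `u/r` with `Q ≤ r < q`. -/
lemma exists_next_center {Ψ : ℝ → ℝ} (hΨpos : ∀ q : ℝ, 0 < q → 0 < Ψ q)
    (hmono : AntitoneOn (fun q : ℝ => q ^ 2 * Ψ q) (Set.Ioi 0)) (Q : ℝ) (hQ : 0 < Q)
    (hsmall : ∀ r : ℝ, Q ≤ r → r ^ 2 * Ψ r ≤ 1 / 1000) (c : ℝ) (N : ℕ) :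
    ∃ (p : ℤ) (q : ℕ), N ≤ q ∧ 0 < q ∧ p.natAbs.Coprime q ∧
      ∀ x, |x - (p : ℝ) / q| ≤ Ψ q → x ∈ Icc c (c + 45 * Ψ Q) ∧
        ∀ (r : ℕ) (u : ℤ), Q ≤ r → r < q → Ψ r ≤ |x - (u : ℝ) / r| := by
  have hP := hΨpos Q hQ
  obtain ⟨y, hy1, hy2, hy⟩ := exists_badly_approx (c + 10 * Ψ Q) (25 * Ψ Q) (by positivity)
  obtain ⟨N', hN'⟩ := exists_nat_gt (max Q (2 / Ψ Q))
  obtain ⟨p, q, hNq, hq, hcop, hpq⟩ :=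
    exists_dirichlet_large y (25 * Ψ Q) (by positivity) hy (max N (N' + 1))
  have hNq' : N' + 1 ≤ q := (le_max_right _ _).trans hNq
  have hq1 : (N' : ℝ) + 1 ≤ q := by exact_mod_cast hNq'
  have hqQ : Q ≤ q := by linarith [le_max_left Q (2 / Ψ Q)]
  have hqP : 2 / Ψ Q ≤ q := by linarith [le_max_right Q (2 / Ψ Q)]
  have hq0 : (1 : ℝ) ≤ q := by exact_mod_cast hq
  have hqq : 2 * (1 / (q : ℝ) ^ 2) ≤ Ψ Q := by
    rw [div_le_iff₀ hP] at hqP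
    rw [mul_one_div, div_le_iff₀ (by positivity)]
    nlinarith
  have hΨq : Ψ q ≤ 1 / 1000 * (1 / (q : ℝ) ^ 2) := by
    rw [mul_one_div, le_div_iff₀ (by positivity)]
    linarith [hsmall q hqQ]
  have hqi : 0 < 1 / (q : ℝ) ^ 2 := by positivity
  refine ⟨p, q, (le_max_left _ _).trans hNq, hq, hcop, fun x hx => ?_⟩
  have hxy : |x - y| ≤ 2 * (1 / (q : ℝ) ^ 2) := by
    have := abs_sub_le x ((p : ℝ) / q) y
    rw [abs_sub_comm ((p : ℝ) / q) y] at this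
    linarith
  refine ⟨?_, fun r u hr hrq => ?_⟩
  · have h := abs_le.1 (hxy.trans hqq)
    constructor <;> linarith [h.1, h.2]
  have hr0' : (0 : ℝ) < r := hQ.trans_le hr
  have hr0 : 0 < r := by exact_mod_cast hr0'
  have htri : |y - (u : ℝ) / r| - 2 * (1 / (q : ℝ) ^ 2) ≤ |x - (u : ℝ) / r| := by
    have := abs_sub_le y x ((u : ℝ) / r)
    rw [abs_sub_comm y x] at this
    linarith
  obtain ⟨h1, h2⟩ := hy r u hr0
  rcases lt_or_ge (2 * (25 * Ψ Q) * (r : ℝ) ^ 2) 1 with h | h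
  · have := Psi_le_of_le hΨpos hmono hQ hr
    linarith [h1 h]
  have h3 := h2 h
  have hrq' : (r : ℝ) < q := by exact_mod_cast hrq
  have hΨr : Ψ r ≤ 1 / 1000 * (1 / (r : ℝ) ^ 2) := by
    rw [mul_one_div, le_div_iff₀ (by positivity)]
    linarith [hsmall r hr]
  rcases le_or_gt (20 * (r : ℝ)) q with h20 | h20
  · have h4 : 1 / (q : ℝ) ^ 2 ≤ 1 / 400 * (1 / (r : ℝ) ^ 2) := by
      have h400 : 1 / 400 * (1 / (r : ℝ) ^ 2) = 1 / (20 * (r : ℝ)) ^ 2 := by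
        field_simp
        norm_num
      rw [h400]
      gcongr
    have h5 : 1 / (64 * (r : ℝ) ^ 2) = 1 / 64 * (1 / (r : ℝ) ^ 2) := by ring
    have h6 : 0 < 1 / (r : ℝ) ^ 2 := by positivity
    linarith
  · have hne : (u : ℝ) / r ≠ (p : ℝ) / q := by
      intro he
      rw [div_eq_div_iff (by positivity) (by positivity)] at he
      have he' : u * (q : ℤ) = p * (r : ℤ) := by exact_mod_cast he
      have hdvd : (q : ℤ) ∣ p * r := ⟨u, by rw [← he']; ring⟩
      have hc : IsCoprime (q : ℤ) p := by
        rw [Int.isCoprime_iff_gcd_eq_one, Int.gcd_comm]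
        simpa [Int.gcd] using hcop
      have := Int.le_of_dvd (by exact_mod_cast hr0) (hc.dvd_of_dvd_mul_left hdvd)
      omega
    have h4 := one_div_le_abs_sub_of_ne u p r q hr0 hq hne
    have h5 : |(u : ℝ) / r - (p : ℝ) / q| ≤ |x - (u : ℝ) / r| + |x - (p : ℝ) / q| := by
      rw [abs_sub_comm x ((u : ℝ) / r)]
      exact abs_sub_le _ _ _
    have h6 : 1 / (q : ℝ) ^ 2 ≤ 1 / ((r : ℝ) * q) := by
      apply one_div_le_one_div_of_le (by positivity)
      nlinarith
    have h7 : 1 / (r : ℝ) ^ 2 ≤ 20 * (1 / ((r : ℝ) * q)) := by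
      rw [mul_one_div, div_le_div_iff₀ (by positivity) (by positivity)]
      nlinarith
    have h8 : 0 < 1 / ((r : ℝ) * q) := by positivity
    linarith

/-- The interval `[lo, lo + ω(q)Ψ(q)]` is one of the two components of
`{x : (1 - ω(q)) Ψ(q) ≤ |x - p/q| ≤ Ψ(q)}`, where `p/q` is reduced and `q ≥ q₀`. -/
structure IsStage (Ψ ω : ℝ → ℝ) (q₀ : ℝ) (p : ℤ) (q : ℕ) (lo : ℝ) : Prop where
  large : q₀ ≤ q
  pos : 0 < q
  coprime : p.natAbs.Coprime q
  near : ∀ x ∈ Icc lo (lo + ω q * Ψ q), |x - (p : ℝ) / q| ≤ Ψ q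
  far : ∀ x ∈ Icc lo (lo + ω q * Ψ q), (1 - ω q) * Ψ q ≤ |x - (p : ℝ) / q|

/-- Every real `z` is missed by the component on the right or by the one on the left of `p/q`. -/
lemma exists_isStage_avoiding {Ψ ω : ℝ → ℝ} (hΨpos : ∀ q : ℝ, 0 < q → 0 < Ψ q)
    (hωmem : ∀ q : ℝ, 0 < q → ω q ∈ Set.Ioo (0 : ℝ) 1) {q₀ : ℝ} {p : ℤ} {q : ℕ}
    (hq : q₀ ≤ q) (hpos : 0 < q) (hcop : p.natAbs.Coprime q) (z : ℝ) :
    ∃ lo, IsStage Ψ ω q₀ p q lo ∧ z ∉ Icc lo (lo + ω q * Ψ q) := by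
  have hq' : (0 : ℝ) < q := by exact_mod_cast hpos
  have hP := hΨpos q hq'
  obtain ⟨hw0, hw1⟩ := hωmem q hq'
  have h1 : 0 < (1 - ω q) * Ψ q := mul_pos (by linarith) hP
  by_cases hz : z ≤ (p : ℝ) / q
  · refine ⟨(p : ℝ) / q + (1 - ω q) * Ψ q, ⟨hq, hpos, hcop, fun x hx => ?_, fun x hx => ?_⟩, ?_⟩
    · rw [abs_le]
      constructor <;> linarith [hx.1, hx.2]
    · exact le_trans (by linarith [hx.1]) (le_abs_self _)
    · intro h
      linarith [h.1]
  · refine ⟨(p : ℝ) / q - Ψ q, ⟨hq, hpos, hcop, fun x hx => ?_, fun x hx => ?_⟩, ?_⟩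
    · rw [abs_le]
      constructor <;> linarith [hx.1, hx.2]
    · exact le_trans (by linarith [hx.2]) (neg_le_abs _)
    · intro h
      linarith [h.2]

/-- The denominators `q ≤ r ≤ 1/(2qΨ(q))` impose no condition on the points of a stage. -/
lemma stage_small_den {Ψ ω : ℝ → ℝ} (hΨpos : ∀ q : ℝ, 0 < q → 0 < Ψ q)
    (hωmem : ∀ q : ℝ, 0 < q → ω q ∈ Set.Ioo (0 : ℝ) 1)
    (hmono : AntitoneOn (fun q : ℝ => q ^ 2 * Ψ q) (Set.Ioi 0)) {q₀ : ℝ}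
    (hsmall : ∀ r : ℝ, q₀ ≤ r → r ^ 2 * Ψ r ≤ 1 / 1000)
    (hω : ∀ r : ℝ, q₀ ≤ r → ω r ≤ 1 / 2) {p : ℤ} {q : ℕ} {lo : ℝ}
    (hst : IsStage Ψ ω q₀ p q lo) {x : ℝ} (hx : x ∈ Icc lo (lo + ω q * Ψ q))
    (r : ℕ) (u : ℤ) (hqr : q ≤ r) (hr : (r : ℝ) ≤ 1 / (2 * q * Ψ q)) :
    (1 - ω r) * Ψ r ≤ |x - (u : ℝ) / r| := by
  have hq' : (0 : ℝ) < q := by exact_mod_cast hst.pos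
  have hqr' : (q : ℝ) ≤ r := by exact_mod_cast hqr
  have hr' : (0 : ℝ) < r := hq'.trans_le hqr'
  have hr0 : 0 < r := by exact_mod_cast hr'
  have hP := hΨpos q hq'
  have hPr := hΨpos r hr'
  have hle : (1 - ω r) * Ψ r ≤ Ψ r := by nlinarith [(hωmem r hr').1]
  have hm : (r : ℝ) ^ 2 * Ψ r ≤ (q : ℝ) ^ 2 * Ψ q :=
    hmono (mem_Ioi.2 hq') (mem_Ioi.2 hr') hqr'
  have hs := hsmall q hst.large
  by_cases he : (u : ℝ) / r = (p : ℝ) / q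
  · rw [he]
    rcases hqr.eq_or_lt with h | h
    · rw [← h]; exact hst.far x hx
    · -- As `p/q` is reduced, `r` is a multiple of `q`, so `r ≥ 2q` and `Ψ(r) ≤ Ψ(q)/4`.
      have h2 : 2 * q ≤ r := by
        rw [div_eq_div_iff (by positivity) (by positivity)] at he
        have he' : u * (q : ℤ) = p * (r : ℤ) := by exact_mod_cast he
        have hdvd : (q : ℤ) ∣ p * r := ⟨u, by rw [← he']; ring⟩
        have hc : IsCoprime (q : ℤ) p := by
          rw [Int.isCoprime_iff_gcd_eq_one, Int.gcd_comm]
          simpa [Int.gcd] using hst.coprime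
        obtain ⟨k, rfl⟩ := Int.natCast_dvd_natCast.1 (hc.dvd_of_dvd_mul_left hdvd)
        have : 2 ≤ k := by
          by_contra! hk
          interval_cases k <;> omega
        nlinarith
      have h2' : 2 * (q : ℝ) ≤ r := by exact_mod_cast h2
      have h3 : 4 * Ψ r ≤ Ψ q := by
        have : (q : ℝ) ^ 2 * (4 * Ψ r) ≤ (q : ℝ) ^ 2 * Ψ q := by
          refine le_trans ?_ hm
          have : (2 * (q : ℝ)) ^ 2 * Ψ r ≤ (r : ℝ) ^ 2 * Ψ r := by gcongr
          linarith
        exact le_of_mul_le_mul_left this (by positivity)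
      have h4 := hst.far x hx
      have h5 := hω q hst.large
      nlinarith
  · have h4 := one_div_le_abs_sub_of_ne u p r q hr0 hst.pos he
    have h5 : |(u : ℝ) / r - (p : ℝ) / q| ≤ |x - (u : ℝ) / r| + |x - (p : ℝ) / q| := by
      rw [abs_sub_comm x ((u : ℝ) / r)]
      exact abs_sub_le _ _ _
    have h6 := hst.near x hx
    have h7 : 2 * Ψ q ≤ 1 / ((r : ℝ) * q) := by
      rw [le_div_iff₀ (by positivity)] at hr ⊢
      linarith
    have h8 := Psi_le_of_le hΨpos hmono hq' hqr'
    linarith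

lemma exists_next_stage {Ψ ω : ℝ → ℝ} (hΨpos : ∀ q : ℝ, 0 < q → 0 < Ψ q)
    (hωmem : ∀ q : ℝ, 0 < q → ω q ∈ Set.Ioo (0 : ℝ) 1)
    (hmono : AntitoneOn (fun q : ℝ => q ^ 2 * Ψ q) (Set.Ioi 0)) {q₀ : ℝ}
    (hsmall : ∀ r : ℝ, q₀ ≤ r → r ^ 2 * Ψ r ≤ 1 / 1000)
    (hω : ∀ r : ℝ, q₀ ≤ r → ω r ≤ 1 / 2)
    (hbig : ∀ q : ℝ, q₀ ≤ q → 45 / Ψ q * Ψ (1 / (2 * q * Ψ q)) ≤ ω q)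
    {p : ℤ} {q : ℕ} {lo : ℝ} (hst : IsStage Ψ ω q₀ p q lo) (z : ℝ) :
    ∃ (p' : ℤ) (q' : ℕ) (lo' : ℝ), IsStage Ψ ω q₀ p' q' lo' ∧ q < q' ∧
      Icc lo' (lo' + ω q' * Ψ q') ⊆ Icc lo (lo + ω q * Ψ q) ∧
      z ∉ Icc lo' (lo' + ω q' * Ψ q') ∧
      ∀ x ∈ Icc lo' (lo' + ω q' * Ψ q'), ∀ (r : ℕ) (u : ℤ), q ≤ r → r < q' →
        (1 - ω r) * Ψ r ≤ |x - (u : ℝ) / r| := by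
  have hq' : (0 : ℝ) < q := by exact_mod_cast hst.pos
  have hP := hΨpos q hq'
  set Q : ℝ := 1 / (2 * q * Ψ q) with hQdef
  have hQ0 : 0 < Q := by positivity
  have hs := hsmall q hst.large
  have hqQ : (q : ℝ) ≤ Q := by
    rw [hQdef, le_div_iff₀ (by positivity)]
    nlinarith
  have hlen : 45 * Ψ Q ≤ ω q * Ψ q := by
    have := hbig q hst.large
    rwa [← hQdef, div_mul_eq_mul_div, div_le_iff₀ hP] at this
  obtain ⟨p', q', hNq, hpos, hcop, hball⟩ := exists_next_center hΨpos hmono Q hQ0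
    (fun r hr => hsmall r (by linarith [hst.large])) lo (q + 1)
  have hqq : (q : ℝ) + 1 ≤ q' := by exact_mod_cast hNq
  obtain ⟨lo', hst', hz⟩ := exists_isStage_avoiding (q₀ := q₀) hΨpos hωmem
    (by linarith [hst.large]) hpos hcop z
  have hsub : Icc lo' (lo' + ω q' * Ψ q') ⊆ Icc lo (lo + ω q * Ψ q) := fun x hx => by
    have := (hball x (hst'.near x hx)).1
    exact ⟨this.1, by linarith [this.2]⟩
  refine ⟨p', q', lo', hst', by omega, hsub, hz, fun x hx r u hqr hrq => ?_⟩
  have hqr' : (q : ℝ) ≤ r := by exact_mod_cast hqr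
  have hr' : (0 : ℝ) < r := hq'.trans_le hqr'
  rcases le_total (r : ℝ) Q with h | h
  · exact stage_small_den hΨpos hωmem hmono hsmall hω hst (hsub hx) r u hqr h
  · refine le_trans ?_ ((hball x (hst'.near x hx)).2 r u h hrq)
    nlinarith [(hωmem r hr').1, hΨpos r hr']

/-! ### Uncountability -/

/-- **Theorem.** If `q ↦ q²Ψ(q)` is non-increasing on `(0,∞)`, `q²Ψ(q) → 0`, `ω(q) → 0`,
`ω` maps `(0,∞)` into `(0,1)`, and `ω(q) ≥ (45/Ψ(q))·Ψ(1/(2qΨ(q)))` for all sufficiently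
large `q`, then `E(Ψ, ω)` is uncountable. -/
theorem uncountable_ESet (Ψ ω : ℝ → ℝ)
    (hΨpos : ∀ q : ℝ, 0 < q → 0 < Ψ q)
    (hωmem : ∀ q : ℝ, 0 < q → ω q ∈ Set.Ioo (0 : ℝ) 1)
    (hΨlim : Filter.Tendsto (fun q : ℝ => q ^ 2 * Ψ q) Filter.atTop (nhds 0))
    (hωlim : Filter.Tendsto ω Filter.atTop (nhds 0))
    (hmono : AntitoneOn (fun q : ℝ => q ^ 2 * Ψ q) (Set.Ioi 0))
    (hbig : ∀ᶠ q : ℝ in Filter.atTop, 45 / Ψ q * Ψ (1 / (2 * q * Ψ q)) ≤ ω q) :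
    ¬ (ESet Ψ ω).Countable := by
  intro hcount
  obtain ⟨z, hz⟩ := Set.countable_iff_exists_subset_range.1 hcount
  have e1 : ∀ᶠ q : ℝ in atTop, q ^ 2 * Ψ q ≤ 1 / 1000 := hΨlim.eventually_le_const (by norm_num)
  have e2 : ∀ᶠ q : ℝ in atTop, ω q ≤ 1 / 2 := hωlim.eventually_le_const (by norm_num)
  obtain ⟨q₀, hq₀⟩ := eventually_atTop.1 (e1.and (e2.and hbig))
  have hsmall := fun r hr => (hq₀ r hr).1
  have hω := fun r hr => (hq₀ r hr).2.1
  have hb := fun r hr => (hq₀ r hr).2.2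
  let S := {s : ℤ × ℕ × ℝ // IsStage Ψ ω q₀ s.1 s.2.1 s.2.2}
  obtain ⟨s₀⟩ : Nonempty S := by
    obtain ⟨M, hM⟩ := exists_nat_gt q₀
    have hM1 : q₀ ≤ ((M + 1 : ℕ) : ℝ) := by push_cast; linarith
    obtain ⟨lo, hlo, -⟩ := exists_isStage_avoiding (p := 1) hΨpos hωmem hM1
      (Nat.succ_pos M) (by simp) 0
    exact ⟨⟨(1, M + 1, lo), hlo⟩⟩
  let I : S → Set ℝ := fun s => Icc s.1.2.2 (s.1.2.2 + ω s.1.2.1 * Ψ s.1.2.1)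
  have hnext : ∀ (s : S) (w : ℝ), ∃ s' : S, s.1.2.1 < s'.1.2.1 ∧ I s' ⊆ I s ∧ w ∉ I s' ∧
      ∀ x ∈ I s', ∀ (r : ℕ) (u : ℤ), s.1.2.1 ≤ r → r < s'.1.2.1 →
        (1 - ω r) * Ψ r ≤ |x - (u : ℝ) / r| := by
    intro s w
    obtain ⟨p', q', lo', h1, h2⟩ :=
      exists_next_stage hΨpos hωmem hmono hsmall hω hb s.2 w
    exact ⟨⟨(p', q', lo'), h1⟩, h2⟩
  choose F hF1 hF2 hF3 hF4 using hnext
  let g : ℕ → S := fun n => Nat.rec s₀ (fun n s => F s (z n)) n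
  have hg : ∀ n, g (n + 1) = F (g n) (z n) := fun n => rfl
  have hqmono : StrictMono fun n => (g n).1.2.1 :=
    strictMono_nat_of_lt_succ fun n => by rw [hg]; exact hF1 _ _
  have hanti : Antitone fun n => Icc (g n).1.2.2
      ((g n).1.2.2 + ω (g n).1.2.1 * Ψ (g n).1.2.1) :=
    antitone_nat_of_succ_le fun n => by
      have := hF2 (g n) (z n)
      rw [← hg] at this
      exact this
  have hmem := ciSup_mem_iInter_Icc_of_antitone_Icc hanti (fun n => by
    have hq : (0 : ℝ) < (g n).1.2.1 := by exact_mod_cast (g n).2.pos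
    have := mul_pos (hωmem _ hq).1 (hΨpos _ hq)
    linarith)
  rw [mem_iInter] at hmem
  set x := ⨆ n, (g n).1.2.2
  have hx : ∀ n, x ∈ I (g n) := hmem
  have hxE : x ∈ ESet Ψ ω := by
    refine ⟨?_, (g 0).1.2.1, fun r hr u => ?_⟩
    · refine Set.infinite_of_injective_forall_mem
        (f := fun n => ((g n).1.1, (g n).1.2.1)) (fun m n hmn => ?_) fun n => ?_
      · exact hqmono.injective (congrArg Prod.snd hmn)
      · exact ⟨(g n).2.pos, (g n).2.near x (hx n)⟩
    · -- Locate `r` between two consecutive denominators.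
      have hex : ∃ n, r < (g n).1.2.1 := ⟨r + 1, hqmono.le_apply (x := r + 1)⟩
      classical
      obtain ⟨n, hn, hmin⟩ : ∃ n, r < (g n).1.2.1 ∧ ∀ m < n, ¬ r < (g m).1.2.1 :=
        ⟨Nat.find hex, Nat.find_spec hex, fun m hm => Nat.find_min hex hm⟩
      rcases n with _ | n
      · omega
      · have h1 := hmin n (Nat.lt_succ_self n)
        have h2 := hx (n + 1)
        rw [hg] at h2 hn
        exact hF4 (g n) (z n) x h2 r u (by omega) hn
  obtain ⟨n, hn⟩ := hz hxE
  have h := hx (n + 1)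
  rw [hg, ← hn] at h
  exact hF3 _ _ h
end

section
/- Let τ > 2 and let Ψ : (0,∞) → (0,∞) be given by Ψ(q) = q^{−τ}. Then there exists C₀ > 0 such that for every C ≥ C₀, taking ω : (0,∞) → (0,∞) given by ω(q) = C·q^{−τ(τ−2)}, the set E(Ψ,ω) is uncountable. -/
/-!
The points of `E(Ψ, ω)` are obtained as intersections of nested *windows*. The window of a rational
`u = p / q` in lowest terms is the interval of all `x` with `(1 - ω(q)) Ψ(q) ≤ x - u ≤ Ψ(q)`; its
length is `C q ^ (-τ(τ - 1))`. A point in infinitely many windows lies in `W(Ψ)`, and it remains to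
ensure the lower bound `|x - p' / r| ≥ (1 - ω(r)) Ψ(r)` for all other fractions.

A fraction `p' / r ≠ u` with `r ≥ q` is at distance at least `1 / (q r)` from `u`, so it can be
within `2 r ^ (-τ)` of the window only if `r ≥ A := q ^ (τ - 1) / 3`. The set of points of an
interval of length `L` that are `2 r ^ (-τ)`-close to a fraction with some denominator `r ≥ A` has
measure `O(L A ^ (2 - τ) + A ^ (-τ))` (`volume_near_rational_le`, by counting separated rationals
over dyadic blocks of denominators). As `A ^ (-τ)` is a constant times `L / C` for the window, this
is at most `L / 2` once `C` exceeds a constant depending on `τ` and `q` is large. Hence the window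
contains an irrational point `y` that avoids all these neighbourhoods (`exists_good_point`).

Now let `v` be a Dirichlet approximation of `y`, with large denominator `n`. Its window lies within
`2 / n²` of `y`. For `r ^ (τ - 1) < 2 n` the margin at `y` gives the lower bound on this new
window, because `τ / (τ - 1) < 2`; for `2 n ≤ r ^ (τ - 1)`, `r < n`, it follows from
`|p' / r - v| ≥ 1 / (r n)`. Thus the new window is safe for all denominators in `[q, n)`
(`exists_next`). It can moreover be made to miss any prescribed point, so no sequence exhausts
`E(Ψ, ω)`.
-/

open Filter Set

open MeasureTheory Metric

/-! ### The measure of the points close to rationals of large denominator -/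

lemma one_div_le_abs_div_sub_div (p p' : ℤ) (q r : ℕ) (hq : 0 < q) (hr : 0 < r)
    (h : (p : ℝ) / q ≠ p' / r) : 1 / ((q : ℝ) * r) ≤ |(p : ℝ) / q - p' / r| := by
  have hq' : (0 : ℝ) < q := by exact_mod_cast hq
  have hr' : (0 : ℝ) < r := by exact_mod_cast hr
  rw [Ne, div_eq_div_iff hq'.ne' hr'.ne'] at h
  rw [div_sub_div _ _ hq'.ne' hr'.ne', abs_div, abs_of_pos (mul_pos hq' hr')]
  gcongr
  have h1 : p * r - q * p' ≠ 0 := by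
    intro h0
    apply h
    have : p * r = p' * q := by linarith
    exact_mod_cast this
  exact_mod_cast Int.one_le_abs h1

lemma den_dvd_of_div_eq {u : ℚ} {p : ℤ} {r : ℕ} (h : (p : ℝ) / r = u) : u.den ∣ r := by
  have h1 : u = Rat.divInt p r := by
    rw [Rat.divInt_eq_div]
    exact_mod_cast h.symm
  have h2 := Rat.den_dvd p r
  rw [← h1] at h2
  exact_mod_cast h2

/-- A `δ`-separated set in an interval of length `ℓ` has at most `ℓ / δ + 1` points, so the balls
of radius `ρ` around its points have total length at most `(ℓ / δ + 1) * 2ρ`. -/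
lemma volume_iUnion_ball_le (S : Set ℝ) (δ ρ a ℓ : ℝ) (hδ : 0 < δ) (hℓ : 0 ≤ ℓ) (hρ : 0 ≤ ρ)
    (hsep : ∀ u ∈ S, ∀ v ∈ S, u ≠ v → δ ≤ |u - v|) (hS : S ⊆ Icc a (a + ℓ)) :
    volume (⋃ u ∈ S, ball u ρ) ≤ ENNReal.ofReal ((ℓ / δ + 1) * (2 * ρ)) := by
  -- `T m` collects the centres lying in the `m`-th cell of length `δ`; there is at most one.
  let T : ℕ → Set ℝ := fun m => {u ∈ S | ⌊(u - a) / δ⌋₊ = m}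
  have hT : ∀ m, (T m).Subsingleton := by
    rintro m u ⟨hu, hum⟩ v ⟨hv, hvm⟩
    by_contra hne
    have h1 := hsep u hu v hv hne
    have hu0 : 0 ≤ (u - a) / δ := div_nonneg (by linarith [(hS hu).1]) hδ.le
    have hv0 : 0 ≤ (v - a) / δ := div_nonneg (by linarith [(hS hv).1]) hδ.le
    have e1 := Nat.floor_le hu0
    have e2 := Nat.lt_floor_add_one ((u - a) / δ)
    have e3 := Nat.floor_le hv0
    have e4 := Nat.lt_floor_add_one ((v - a) / δ)
    rw [hum] at e1 e2
    rw [hvm] at e3 e4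
    rw [le_div_iff₀ hδ] at e1 e3
    rw [div_lt_iff₀ hδ] at e2 e4
    have : |u - v| < δ := by
      rw [abs_lt]; constructor <;> linarith
    linarith
  have hball : ∀ m, volume (⋃ u ∈ T m, ball u ρ) ≤ ENNReal.ofReal (2 * ρ) := by
    intro m
    rcases (hT m).eq_empty_or_singleton with h | ⟨u, h⟩
    · simp [h]
    · simp [h, Real.volume_ball]
  have hsub : (⋃ u ∈ S, ball u ρ) ⊆
      ⋃ m ∈ Finset.range (⌊ℓ / δ⌋₊ + 1), ⋃ u ∈ T m, ball u ρ := by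
    intro x hx
    simp only [mem_iUnion, exists_prop] at hx ⊢
    obtain ⟨u, hu, hxu⟩ := hx
    refine ⟨⌊(u - a) / δ⌋₊, ?_, u, ⟨hu, rfl⟩, hxu⟩
    rw [Finset.mem_range, Nat.lt_succ_iff]
    apply Nat.floor_le_floor
    have := (hS hu).2
    gcongr
    linarith
  calc volume (⋃ u ∈ S, ball u ρ)
      ≤ ∑ m ∈ Finset.range (⌊ℓ / δ⌋₊ + 1), volume (⋃ u ∈ T m, ball u ρ) :=
        (measure_mono hsub).trans (measure_biUnion_finset_le _ _)
    _ ≤ ∑ m ∈ Finset.range (⌊ℓ / δ⌋₊ + 1), ENNReal.ofReal (2 * ρ) :=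
        Finset.sum_le_sum fun m _ => hball m
    _ = ENNReal.ofReal ((⌊ℓ / δ⌋₊ + 1 : ℕ) * (2 * ρ)) := by
        rw [Finset.sum_const, Finset.card_range, nsmul_eq_mul,
          ENNReal.ofReal_mul (Nat.cast_nonneg _), ENNReal.ofReal_natCast]
    _ ≤ _ := by
        apply ENNReal.ofReal_le_ofReal
        push_cast
        gcongr
        exact Nat.floor_le (by positivity)

/-- Denominators in a dyadic block `[N, 2N)`: distinct fractions `p / r` with such denominators are
at least `1 / (4N²)` apart, hence `[a, b]` meets only `O(N² (b - a) + 1)` of their neighbourhoods.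
Counting by blocks matters: counting separately for each `r` would replace the summand `1` by `N`,
which is too much for `exists_good_point`. -/
lemma volume_block_le (τ : ℝ) (hτ : 2 < τ) (a b N : ℝ) (hab : a ≤ b) (hN : 1 ≤ N) :
    volume {x ∈ Icc a b | ∃ r : ℕ, ∃ p : ℤ, N ≤ r ∧ r < 2 * N ∧
      |x - p / r| < 2 * (r : ℝ) ^ (-τ)} ≤
      ENNReal.ofReal (68 * ((b - a) * N ^ (2 - τ) + N ^ (-τ))) := by
  have hN0 : 0 < N := by linarith
  set ν := N ^ (-τ) with hν
  have hν0 : 0 < ν := Real.rpow_pos_of_pos hN0 _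
  have hν2 : N ^ 2 * ν = N ^ (2 - τ) := by
    rw [hν, ← Real.rpow_natCast, ← Real.rpow_add hN0]; norm_num; ring_nf
  have hν1 : N ^ 2 * ν ≤ 1 := by
    rw [hν2]; exact Real.rpow_le_one_of_one_le_of_nonpos hN (by linarith)
  let S : Set ℝ := {u | u ∈ Icc (a - 2 * ν) (a - 2 * ν + (b - a + 4 * ν)) ∧
    ∃ r : ℕ, ∃ p : ℤ, N ≤ r ∧ r < 2 * N ∧ u = p / r}
  have hS := volume_iUnion_ball_le S (1 / (4 * N ^ 2)) (2 * ν) (a - 2 * ν) (b - a + 4 * ν)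
    (by positivity) (by linarith) (by linarith) ?_ (fun u hu => hu.1)
  · refine (measure_mono ?_).trans (hS.trans (ENNReal.ofReal_le_ofReal ?_))
    · rintro x ⟨hx, r, p, h1, h2, h3⟩
      have h4 : |x - p / r| < 2 * ν :=
        h3.trans_le (by
          have := Real.rpow_le_rpow_of_nonpos hN0 h1 (show -τ ≤ 0 by linarith)
          linarith)
      simp only [mem_iUnion, exists_prop]
      refine ⟨p / r, ⟨?_, r, p, h1, h2, rfl⟩, by rwa [mem_ball, Real.dist_eq]⟩
      rw [abs_lt] at h4
      constructor <;> linarith [hx.1, hx.2]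
    · rw [← hν2]
      have : (b - a + 4 * ν) / (1 / (4 * N ^ 2)) = 4 * (N ^ 2 * (b - a)) + 16 * (N ^ 2 * ν) := by
        field_simp; ring
      rw [this]
      have h5 : 0 ≤ N ^ 2 * (b - a) := mul_nonneg (by positivity) (by linarith)
      nlinarith [mul_nonneg h5 hν0.le]
  · rintro u ⟨-, r, p, h1, h2, rfl⟩ v ⟨-, r', p', h1', h2', rfl⟩ hne
    have hr : (0 : ℝ) < r := by linarith
    have hr' : (0 : ℝ) < r' := by linarith
    refine le_trans ?_ (one_div_le_abs_div_sub_div p p' r r' (by exact_mod_cast hr)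
      (by exact_mod_cast hr') hne)
    apply one_div_le_one_div_of_le (by positivity)
    nlinarith

/-- Summation of `volume_block_le` over the dyadic blocks starting at `A`; the bounds decay
geometrically with ratio `2 ^ (2 - τ) < 1`. -/
lemma volume_near_rational_le (τ : ℝ) (hτ : 2 < τ) (a b A : ℝ) (hab : a ≤ b) (hA : 1 ≤ A) :
    volume {x ∈ Icc a b | ∃ r : ℕ, ∃ p : ℤ, A ≤ r ∧ |x - p / r| < 2 * (r : ℝ) ^ (-τ)} ≤
      ENNReal.ofReal (68 / (1 - 2 ^ (2 - τ)) * ((b - a) * A ^ (2 - τ) + A ^ (-τ))) := by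
  have hA0 : 0 < A := by linarith
  set θ : ℝ := 2 ^ (2 - τ) with hθ
  have hθ0 : 0 < θ := Real.rpow_pos_of_pos two_pos _
  have hθ1 : θ < 1 := Real.rpow_lt_one_of_one_lt_of_neg one_lt_two (by linarith)
  set D := (b - a) * A ^ (2 - τ) + A ^ (-τ) with hD
  have hba : 0 ≤ b - a := by linarith
  have hD0 : 0 ≤ D := by positivity
  let U : ℕ → Set ℝ := fun j => {x ∈ Icc a b | ∃ r : ℕ, ∃ p : ℤ, A * 2 ^ j ≤ r ∧
    r < 2 * (A * 2 ^ j) ∧ |x - p / r| < 2 * (r : ℝ) ^ (-τ)}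
  have hU : ∀ j, volume (U j) ≤ ENNReal.ofReal (68 * D * θ ^ j) := by
    intro j
    have h2j : (1 : ℝ) ≤ 2 ^ j := one_le_pow₀ one_le_two
    refine (volume_block_le τ hτ a b (A * 2 ^ j) hab (by nlinarith)).trans
      (ENNReal.ofReal_le_ofReal ?_)
    have e1 : (A * 2 ^ j) ^ (2 - τ) = A ^ (2 - τ) * θ ^ j := by
      rw [Real.mul_rpow hA0.le (by positivity), hθ, ← Real.rpow_natCast, ← Real.rpow_natCast,
        ← Real.rpow_mul two_pos.le, ← Real.rpow_mul two_pos.le, mul_comm (j : ℝ)]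
    have e2 : (A * 2 ^ j) ^ (-τ) ≤ A ^ (-τ) * θ ^ j := by
      rw [Real.mul_rpow hA0.le (by positivity), hθ, ← Real.rpow_natCast, ← Real.rpow_natCast,
        ← Real.rpow_mul two_pos.le, ← Real.rpow_mul two_pos.le, mul_comm (j : ℝ)]
      gcongr
      · norm_num
      · linarith
    rw [e1, hD]
    nlinarith
  have hsub : {x ∈ Icc a b | ∃ r : ℕ, ∃ p : ℤ, A ≤ r ∧ |x - p / r| < 2 * (r : ℝ) ^ (-τ)} ⊆
      ⋃ j, U j := by
    rintro x ⟨hx, r, p, h1, h2⟩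
    obtain ⟨j, hj1, hj2⟩ := exists_nat_pow_near (x := (r : ℝ) / A) (y := 2)
      (by rwa [one_le_div hA0]) one_lt_two
    rw [le_div_iff₀ hA0] at hj1
    rw [div_lt_iff₀ hA0, pow_succ] at hj2
    exact mem_iUnion.2 ⟨j, hx, r, p, by linarith, by linarith, h2⟩
  have hsum : HasSum (fun j => 68 * D * θ ^ j) (68 * D * (1 - θ)⁻¹) :=
    (hasSum_geometric_of_lt_one hθ0.le hθ1).mul_left _
  calc _ ≤ ∑' j, volume (U j) := (measure_mono hsub).trans (measure_iUnion_le _)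
    _ ≤ ∑' j, ENNReal.ofReal (68 * D * θ ^ j) := ENNReal.tsum_le_tsum hU
    _ = ENNReal.ofReal (68 * D * (1 - θ)⁻¹) := by
        rw [← ENNReal.ofReal_tsum_of_nonneg (fun j => by positivity) hsum.summable, hsum.tsum_eq]
    _ = _ := by congr 1; ring

/-! ### Windows and the inductive step -/

/-- The interval of points `x` to the right of `u = p / q` (in lowest terms) with
`(1 - ω(q)) Ψ(q) ≤ x - p / q ≤ Ψ(q)`, where `Ψ(q) = q ^ (-τ)` and `ω(q) = C q ^ (-τ(τ - 2))`.
Its length is `C q ^ (-τ(τ - 1))`. -/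
noncomputable def window (τ C : ℝ) (u : ℚ) : Set ℝ :=
  Icc (u + (1 - C * (u.den : ℝ) ^ (-(τ * (τ - 2)))) * (u.den : ℝ) ^ (-τ))
    (u + (u.den : ℝ) ^ (-τ))

/-- The finitely many ways in which a denominator `n` has to be large; all of them hold for all
sufficiently large `n`. The cutoff `n ^ (τ - 1) / 3` bounds from below the denominators `r ≥ n` of
the fractions, other than `u` itself, that can come close to the window of a rational `u` of
denominator `n`. -/
structure LargeDen (τ C n : ℝ) : Prop where
  one_le : 1 ≤ n
  omega_le : C * n ^ (-(τ * (τ - 2))) ≤ 1 / 2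
  density_le : 68 / (1 - 2 ^ (2 - τ)) * (n ^ (τ - 1) / 3) ^ (2 - τ) ≤ 1 / 4
  one_le_cutoff : 1 ≤ n ^ (τ - 1) / 3
  two_le : 2 ≤ n ^ (τ - 2)
  dirichlet_le : 2 / n ^ 2 ≤ (2 * n) ^ (-(τ / (τ - 1)))

lemma eventually_largeDen (τ C : ℝ) (hτ : 2 < τ) : ∀ᶠ n : ℝ in atTop, LargeDen τ C n := by
  have t1 : Tendsto (fun n : ℝ => n ^ (τ - 1) / 3) atTop atTop :=
    (tendsto_rpow_atTop (by linarith)).atTop_div_const (by norm_num)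
  have e2 : ∀ᶠ n : ℝ in atTop, C * n ^ (-(τ * (τ - 2))) ≤ 1 / 2 := by
    have := (tendsto_rpow_neg_atTop (show 0 < τ * (τ - 2) by nlinarith)).const_mul C
    rw [mul_zero] at this
    exact this.eventually_le_const (by norm_num)
  have e3 : ∀ᶠ n : ℝ in atTop,
      68 / (1 - 2 ^ (2 - τ)) * (n ^ (τ - 1) / 3) ^ (2 - τ) ≤ 1 / 4 := by
    have := ((tendsto_rpow_neg_atTop (show 0 < τ - 2 by linarith)).comp t1).const_mul
      (68 / (1 - 2 ^ (2 - τ)) : ℝ)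
    rw [mul_zero] at this
    simpa using this.eventually_le_const (show (0 : ℝ) < 1 / 4 by norm_num)
  have e6 : ∀ᶠ n : ℝ in atTop, (2 * n) ^ (-(2 - τ / (τ - 1))) ≤ 1 / 8 := by
    have hs : 0 < 2 - τ / (τ - 1) := by
      rw [sub_pos, div_lt_iff₀ (by linarith)]; linarith
    exact ((tendsto_rpow_neg_atTop hs).comp
      (tendsto_id.const_mul_atTop two_pos)).eventually_le_const (by norm_num)
  filter_upwards [eventually_ge_atTop 1, e2, e3, t1.eventually_ge_atTop 1,
    (tendsto_rpow_atTop (show 0 < τ - 2 by linarith)).eventually_ge_atTop 2, e6]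
    with n h1 h2 h3 h4 h5 h6
  refine ⟨h1, h2, h3, h4, h5, ?_⟩
  have hn : 0 < 2 * n := by linarith
  have key : (2 * n) ^ (-(2 - τ / (τ - 1))) * (2 * n) ^ (-(τ / (τ - 1))) = 1 / (2 * n) ^ 2 := by
    rw [← Real.rpow_add hn, show -(2 - τ / (τ - 1)) + -(τ / (τ - 1)) = -(2 : ℕ) by push_cast; ring,
      Real.rpow_neg hn.le, Real.rpow_natCast, one_div]
  have hp : 0 < (2 * n) ^ (-(τ / (τ - 1))) := Real.rpow_pos_of_pos hn _
  have : 2 / n ^ 2 = 8 * (1 / (2 * n) ^ 2) := by field_simp; norm_num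
  rw [this, ← key]
  nlinarith

lemma sub_mem_of_mem_window {τ C : ℝ} {u : ℚ} (h : LargeDen τ C u.den) {x : ℝ}
    (hx : x ∈ window τ C u) :
    1 / 2 * (u.den : ℝ) ^ (-τ) ≤ x - u ∧ x - u ≤ (u.den : ℝ) ^ (-τ) := by
  have h0 : 0 < (u.den : ℝ) ^ (-τ) := Real.rpow_pos_of_pos (by linarith [h.one_le]) _
  have := h.omega_le
  constructor
  · nlinarith [hx.1]
  · linarith [hx.2]

/-- A window of denominator `q` contains points that keep distance `2 r ^ (-τ)` from every
fraction `p / r ≠ u` with `r ≥ q`. Since the window lies within `q ^ (-τ)` of `u`, only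
`r ≥ q ^ (τ - 1) / 3` can interfere, and by `volume_near_rational_le` those cover at most half of
the window: the term `A ^ (-τ)` there is comparable with `q ^ (-τ(τ - 1))`, which is
the length of the window divided by `C`, and this is why `C` has to be large. -/
lemma exists_good_point (τ C : ℝ) (hτ : 2 < τ) (hC0 : 0 < C)
    (hC : 4 * (68 / (1 - 2 ^ (2 - τ))) * 3 ^ τ ≤ C) (u : ℚ) (h : LargeDen τ C u.den) (c : ℝ) :
    ∃ x ∈ interior (window τ C u), Irrational x ∧ x ≠ c ∧
      ∀ r : ℕ, u.den ≤ r → ∀ p : ℤ, (p : ℝ) / r ≠ u → 2 * (r : ℝ) ^ (-τ) ≤ |x - p / r| := by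
  set n : ℝ := (u.den : ℝ) with hn
  set K : ℝ := 68 / (1 - 2 ^ (2 - τ)) with hK
  have hn1 := h.one_le
  have hn0 : 0 < n := by linarith
  set ν := n ^ (-τ) with hν
  have hν0 : 0 < ν := Real.rpow_pos_of_pos hn0 _
  set lo : ℝ := u + (1 - C * n ^ (-(τ * (τ - 2)))) * ν with hlo
  set hi : ℝ := u + ν with hhi
  set L := hi - lo with hL
  have hLC : L = C * n ^ (-(τ * (τ - 1))) := by
    rw [show -(τ * (τ - 1)) = -(τ * (τ - 2)) + -τ by ring, Real.rpow_add hn0, hL, hlo, hhi, hν]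
    ring
  have hL0 : 0 < L := by rw [hLC]; exact mul_pos hC0 (Real.rpow_pos_of_pos hn0 _)
  have hAτ : (n ^ (τ - 1) / 3) ^ (-τ) = 3 ^ τ * n ^ (-(τ * (τ - 1))) := by
    rw [Real.div_rpow (by positivity) (by norm_num), ← Real.rpow_mul hn0.le,
      Real.rpow_neg (by norm_num : (0 : ℝ) ≤ 3), div_inv_eq_mul, mul_comm]
    congr 2; ring
  have hbad := volume_near_rational_le τ hτ lo hi (n ^ (τ - 1) / 3) (by linarith) h.one_le_cutoff
  set Bad := {x ∈ Icc lo hi | ∃ r : ℕ, ∃ p : ℤ, n ^ (τ - 1) / 3 ≤ r ∧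
    |x - p / r| < 2 * (r : ℝ) ^ (-τ)} with hBad
  have hbad2 : volume Bad ≤ ENNReal.ofReal (L / 2) := by
    refine hbad.trans (ENNReal.ofReal_le_ofReal ?_)
    rw [← hK, ← hL, hAτ]
    have h1 := h.density_le
    rw [← hK] at h1
    have h2 : 0 < n ^ (-(τ * (τ - 1))) := Real.rpow_pos_of_pos hn0 _
    have h3 := mul_le_mul_of_nonneg_right hC h2.le
    rw [← hLC] at h3
    nlinarith
  have hnot : ¬ Ioo lo hi ⊆ Bad ∪ (range ((↑) : ℚ → ℝ) ∪ {c}) := by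
    intro hsub
    have h0 : volume (range ((↑) : ℚ → ℝ) ∪ {c}) = 0 :=
      ((countable_range _).union (countable_singleton c)).measure_zero _
    have h1 : volume (Ioo lo hi) ≤ ENNReal.ofReal (L / 2) := by
      refine (measure_mono hsub).trans ((measure_union_le _ _).trans ?_)
      rw [h0, add_zero]
      exact hbad2
    rw [Real.volume_Ioo, ENNReal.ofReal_le_ofReal_iff (by linarith)] at h1
    linarith
  obtain ⟨x, hx, hxE⟩ := not_subset.1 hnot
  simp only [mem_union, mem_singleton_iff, not_or] at hxE
  obtain ⟨hxB, hxQ, hxc⟩ := hxE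
  refine ⟨x, by rw [window, interior_Icc]; exact hx, hxQ, hxc, ?_⟩
  intro r hr p hpr
  by_contra! hlt
  apply hxB
  refine ⟨Ioo_subset_Icc_self hx, r, p, ?_, hlt⟩
  have hrn : n ≤ r := by rw [hn]; exact_mod_cast hr
  have hr0 : (0 : ℝ) < r := by linarith
  have h1 : (r : ℝ) ^ (-τ) ≤ ν := Real.rpow_le_rpow_of_nonpos hn0 hrn (by linarith)
  have h2 := sub_mem_of_mem_window h (x := x) (Ioo_subset_Icc_self hx)
  have h3 : 1 / ((r : ℝ) * n) ≤ |(p : ℝ) / r - u| := by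
    have := one_div_le_abs_div_sub_div p u.num r u.den (by exact_mod_cast hr0) u.den_pos
      (by rwa [← Rat.cast_def])
    rwa [← Rat.cast_def] at this
  have h4 : |(p : ℝ) / r - u| ≤ 3 * ν := by
    rw [abs_lt] at hlt
    rw [abs_le]
    constructor <;> linarith [h2.1, h2.2]
  have h5 : ν * n ^ (τ - 1) * n = 1 := by
    rw [hν, ← Real.rpow_add hn0, show -τ + (τ - 1) = -1 by ring, Real.rpow_neg_one]
    exact inv_mul_cancel₀ hn0.ne'
  have h6 := h3.trans h4
  rw [div_le_iff₀ (by positivity)] at h6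
  have h7 : 0 < n ^ (τ - 1) := Real.rpow_pos_of_pos hn0 _
  have h8 : n ^ (τ - 1) * 1 ≤ n ^ (τ - 1) * (3 * ν * (r * n)) := by gcongr
  have h9 : n ^ (τ - 1) * (3 * ν * (r * n)) = 3 * r * (ν * n ^ (τ - 1) * n) := by ring
  rw [h9, h5] at h8
  linarith

/-- Dirichlet approximation of an irrational with arbitrarily large denominators. -/
lemma exists_rat_den_large {x : ℝ} (hx : Irrational x) (N : ℕ) :
    ∃ v : ℚ, N < v.den ∧ |x - v| ≤ 1 / (v.den : ℝ) ^ 2 := by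
  have h := hx.eventually_forall_le_dist_cast_rat_of_den_le N
  obtain ⟨ε, hε, hball⟩ := Metric.eventually_nhds_iff_ball.1 h
  obtain ⟨m, hm⟩ := exists_nat_one_div_lt (half_pos hε)
  obtain ⟨v, hv1, hv2⟩ := Real.exists_rat_abs_sub_le_and_den_le x (n := m + 1) (by omega)
  have hd : (1 : ℝ) ≤ v.den := by exact_mod_cast v.den_pos
  refine ⟨v, ?_, hv1.trans ?_⟩
  · by_contra! hle
    have h1 := hball (ε / 2) (by rw [mem_ball, Real.dist_eq, sub_zero, abs_of_pos] <;> linarith)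
      v hle
    rw [Real.dist_eq] at h1
    have h2 : 1 / (((m + 1 : ℕ) + 1 : ℝ) * v.den) ≤ 1 / ((m : ℝ) + 1) := by
      apply one_div_le_one_div_of_le (by positivity)
      push_cast
      nlinarith
    linarith
  · apply one_div_le_one_div_of_le (by positivity)
    have : (v.den : ℝ) ≤ (m + 1 : ℕ) := by exact_mod_cast hv2
    nlinarith

/-- The inductive step: inside the window of `u` there is the window of some `v` of larger
denominator that avoids a given point `c` and on which the lower bound defining `E(Ψ, ω)` holds for
all denominators in `[u.den, v.den)`. Here `v` is a Dirichlet approximation of a point `y` given by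
`exists_good_point`. -/
lemma exists_next (τ C : ℝ) (hτ : 2 < τ) (hC0 : 0 < C)
    (hC : 4 * (68 / (1 - 2 ^ (2 - τ))) * 3 ^ τ ≤ C) (Q : ℕ)
    (hQ : ∀ n : ℕ, Q ≤ n → LargeDen τ C n) (u : ℚ) (hu : Q ≤ u.den) (c : ℝ) :
    ∃ v : ℚ, u.den < v.den ∧ window τ C v ⊆ window τ C u ∧ c ∉ window τ C v ∧
      ∀ x ∈ window τ C v, ∀ r : ℕ, u.den ≤ r → r < v.den → ∀ p : ℤ,
        (1 - C * (r : ℝ) ^ (-(τ * (τ - 2)))) * (r : ℝ) ^ (-τ) ≤ |x - p / r| := by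
  have hLu := hQ u.den hu
  obtain ⟨y, hy, hyirr, hyc, hyr⟩ := exists_good_point τ C hτ hC0 hC u hLu c
  obtain ⟨ε, hε, hball⟩ := Metric.isOpen_iff.1 (isOpen_interior.sdiff isClosed_singleton) y
    (show y ∈ interior (window τ C u) \ {c} from ⟨hy, hyc⟩)
  obtain ⟨m, hm⟩ := exists_nat_gt (2 / ε)
  obtain ⟨v, hv, hyv⟩ := exists_rat_den_large hyirr (max u.den m)
  have hvu : u.den < v.den := (le_max_left _ _).trans_lt hv
  have hvm : (m : ℝ) < v.den := by exact_mod_cast (le_max_right _ _).trans_lt hv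
  have hLv := hQ v.den (hu.trans hvu.le)
  set n : ℝ := (v.den : ℝ) with hn
  have hn1 := hLv.one_le
  have hn0 : 0 < n := by linarith
  have hnτ : n ^ (-τ) * 2 ≤ 1 / n ^ 2 := by
    have h1 : n ^ (-τ) * n ^ (τ - 2) = 1 / n ^ 2 := by
      rw [← Real.rpow_add hn0, show -τ + (τ - 2) = -(2 : ℕ) by push_cast; ring,
        Real.rpow_neg hn0.le, Real.rpow_natCast, one_div]
    rw [← h1]
    have := hLv.two_le
    gcongr
  have hν0 : 0 < n ^ (-τ) := Real.rpow_pos_of_pos hn0 _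
  have hdist : ∀ x ∈ window τ C v, |x - y| ≤ 2 / n ^ 2 := by
    intro x hx
    have h1 := sub_mem_of_mem_window hLv hx
    rw [← hn] at h1
    have h2 : 2 / n ^ 2 = 2 * (1 / n ^ 2) := by ring
    rw [h2]
    rw [abs_le] at hyv ⊢
    constructor <;> linarith [h1.1, h1.2, hyv.1, hyv.2]
  have hsub : window τ C v ⊆ interior (window τ C u) \ {c} := by
    intro x hx
    apply hball
    rw [mem_ball, Real.dist_eq]
    refine (hdist x hx).trans_lt ?_
    have h1 : 2 < ε * n := by
      rw [div_lt_iff₀ hε] at hm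
      nlinarith
    rw [div_lt_iff₀ (by positivity)]
    nlinarith
  refine ⟨v, hvu, fun x hx => interior_subset (hsub hx).1, fun hc => (hsub hc).2 rfl, ?_⟩
  intro x hx r hur hrv p
  have hu0 : (0 : ℝ) < u.den := by exact_mod_cast u.den_pos
  have hur' : (u.den : ℝ) ≤ r := by exact_mod_cast hur
  have hrn : (r : ℝ) < n := by rw [hn]; exact_mod_cast hrv
  have hr0 : (0 : ℝ) < r := by linarith
  have hrτ : 0 < (r : ℝ) ^ (-τ) := Real.rpow_pos_of_pos hr0 _
  have hω : (1 - C * (r : ℝ) ^ (-(τ * (τ - 2)))) * (r : ℝ) ^ (-τ) ≤ (r : ℝ) ^ (-τ) := by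
    have : 0 < C * (r : ℝ) ^ (-(τ * (τ - 2))) := mul_pos hC0 (Real.rpow_pos_of_pos hr0 _)
    nlinarith
  have hxu : x ∈ window τ C u := interior_subset (hsub hx).1
  by_cases hpu : (p : ℝ) / r = u
  · rw [hpu]
    have h1 := sub_mem_of_mem_window hLu hxu
    obtain ⟨k, rfl⟩ := den_dvd_of_div_eq hpu
    -- `p / r` is `u` itself, and `r` is a multiple `k * u.den`.
    rcases Nat.lt_or_ge k 2 with hk | hk
    · have hk1 : k = 1 := by
        interval_cases k
        · simp at hr0
        · rfl
      subst hk1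
      rw [mul_one]
      refine le_trans ?_ (le_abs_self _)
      linarith [hxu.1]
    · refine hω.trans (le_trans ?_ (le_abs_self _))
      refine le_trans ?_ h1.1
      have h4 : ((u.den * k : ℕ) : ℝ) ^ (-τ) ≤ (2 * (u.den : ℝ)) ^ (-τ) := by
        apply Real.rpow_le_rpow_of_nonpos (by positivity) _ (by linarith)
        have : (2 : ℝ) ≤ k := by exact_mod_cast hk
        push_cast
        nlinarith
      refine h4.trans ?_
      rw [Real.mul_rpow two_pos.le hu0.le]
      gcongr
      calc (2 : ℝ) ^ (-τ) ≤ 2 ^ (-1 : ℝ) :=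
            Real.rpow_le_rpow_of_exponent_le one_le_two (by linarith)
        _ = 1 / 2 := by rw [Real.rpow_neg_one]; norm_num
  · refine hω.trans ?_
    have h1 := hyr r hur p hpu
    -- Small `r`: the margin `2 r ^ (-τ)` at `y` survives the move from `y` to `x`.
    -- Large `r`: the separation of `p / r` from `v` suffices.
    rcases lt_or_ge ((r : ℝ) ^ (τ - 1)) (2 * n) with hlt | hge
    · have h2 : (2 * n) ^ (-(τ / (τ - 1))) ≤ (r : ℝ) ^ (-τ) := by
        have h3 := Real.rpow_le_rpow_of_nonpos (Real.rpow_pos_of_pos hr0 (τ - 1)) hlt.le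
          (show -(τ / (τ - 1)) ≤ 0 by
            have : 0 < τ / (τ - 1) := div_pos (by linarith) (by linarith)
            linarith)
        rw [← Real.rpow_mul hr0.le] at h3
        have h4 : (τ - 1) * -(τ / (τ - 1)) = -τ := by
          have : τ - 1 ≠ 0 := by linarith
          field_simp
        rwa [h4] at h3
      have h5 := (hdist x hx).trans (hLv.dirichlet_le.trans h2)
      have h6 := abs_sub_le y x ((p : ℝ) / r)
      rw [abs_sub_comm y x] at h6
      linarith
    · have hne : (p : ℝ) / r ≠ v := by
        intro hpv
        exact absurd (Nat.le_of_dvd (by exact_mod_cast hr0) (den_dvd_of_div_eq hpv)) (by omega)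
      have h2 : 1 / ((r : ℝ) * n) ≤ |(p : ℝ) / r - v| := by
        have := one_div_le_abs_div_sub_div p v.num r v.den (by exact_mod_cast hr0) v.den_pos
          (by rwa [← Rat.cast_def])
        rwa [← Rat.cast_def] at this
      have h3 := sub_mem_of_mem_window hLv hx
      rw [← hn] at h3
      have h4 : |x - v| ≤ n ^ (-τ) := by
        rw [abs_le]; constructor <;> linarith [h3.1, h3.2]
      have h5 := abs_sub_le ((p : ℝ) / r) x v
      rw [abs_sub_comm ((p : ℝ) / r) x] at h5
      have h6 : n ^ (-τ) * 2 ≤ 1 / (r * n) := by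
        refine hnτ.trans (one_div_le_one_div_of_le (by positivity) ?_)
        nlinarith
      have h7 : (r : ℝ) ^ (-τ) * 2 ≤ 1 / (r * n) := by
        have h8 : (r : ℝ) ^ (-τ) * (r : ℝ) ^ (τ - 1) * r = 1 := by
          rw [← Real.rpow_add hr0, show -τ + (τ - 1) = -1 by ring, Real.rpow_neg_one]
          exact inv_mul_cancel₀ hr0.ne'
        rw [le_div_iff₀ (by positivity)]
        have h9 : (r : ℝ) ^ (-τ) * (2 * n) * r ≤ (r : ℝ) ^ (-τ) * (r : ℝ) ^ (τ - 1) * r := by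
          gcongr
        linarith
      linarith

/-! ### Nested windows avoiding a sequence -/

/-- **Theorem.** For `τ > 2` and `Ψ(q) = q^(−τ)`, there exists `C₀ > 0` such that for every
`C ≥ C₀`, taking `ω(q) = C·q^(−τ(τ−2))`, the set `E(Ψ, ω)` is uncountable. -/
theorem uncountable_ESet_rpow (τ : ℝ) (hτ : 2 < τ) :
    ∃ C₀ : ℝ, 0 < C₀ ∧ ∀ C : ℝ, C₀ ≤ C →
      ¬ (ESet (fun q : ℝ => q ^ (-τ)) (fun q : ℝ => C * q ^ (-(τ * (τ - 2))))).Countable := by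
  have hθ1 : (2 : ℝ) ^ (2 - τ) < 1 :=
    Real.rpow_lt_one_of_one_lt_of_neg one_lt_two (by linarith)
  have hC₀ : (0 : ℝ) < 4 * (68 / (1 - 2 ^ (2 - τ))) * 3 ^ τ :=
    mul_pos (mul_pos (by norm_num) (div_pos (by norm_num) (by linarith))) (by positivity)
  refine ⟨_, hC₀, fun C hC hcount => ?_⟩
  have hC0 := hC₀.trans_le hC
  obtain ⟨Q', hQ'⟩ := eventually_atTop.1
    (tendsto_natCast_atTop_atTop.eventually (eventually_largeDen τ C hτ))
  set Q := max Q' 1 with hQdef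
  have hQ : ∀ n : ℕ, Q ≤ n → LargeDen τ C n := fun n hn => hQ' n ((le_max_left _ _).trans hn)
  obtain ⟨c, hc⟩ : ∃ c : ℕ → ℝ,
      ESet (fun q : ℝ => q ^ (-τ)) (fun q : ℝ => C * q ^ (-(τ * (τ - 2)))) ⊆ range c := by
    rcases eq_empty_or_nonempty
      (ESet (fun q : ℝ => q ^ (-τ)) (fun q : ℝ => C * q ^ (-(τ * (τ - 2))))) with h | h
    · exact ⟨fun _ => 0, by rw [h]; exact empty_subset _⟩
    · obtain ⟨c, hc⟩ := hcount.exists_eq_range h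
      exact ⟨c, hc.subset⟩
  -- If `c` enumerated the set, nested windows missing `c 0, c 1, …` would produce a further point.
  choose next hden hsub hmiss hsafe using fun (u : {u : ℚ // Q ≤ u.den}) (k : ℕ) =>
    exists_next τ C hτ hC0 hC Q hQ u.1 u.2 (c k)
  have hstart : Q ≤ ((1 : ℚ) / (Q : ℕ)).den := by
    have : 0 < Q := lt_of_lt_of_le one_pos (le_max_right _ _)
    rw [one_div, Rat.inv_natCast_den_of_pos this]
  let s : ℕ → {u : ℚ // Q ≤ u.den} := fun k => Nat.rec ⟨1 / (Q : ℕ), hstart⟩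
    (fun k u => ⟨next u k, u.2.trans (hden u k).le⟩) k
  have hs : ∀ k, (s (k + 1)).1 = next (s k) k := fun k => rfl
  have hmono : StrictMono fun k => (s k).1.den :=
    strictMono_nat_of_lt_succ fun k => by rw [hs]; exact hden _ _
  have hlarge : ∀ k, LargeDen τ C (s k).1.den := fun k => hQ _ (s k).2
  obtain ⟨x, hx⟩ : (⋂ k, window τ C (s k).1).Nonempty := by
    apply IsCompact.nonempty_iInter_of_sequence_nonempty_isCompact_isClosed
    · intro k; rw [hs]; exact hsub _ _
    · intro k
      apply nonempty_Icc.2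
      have h1 := (hlarge k).one_le
      have h2 : 0 < ((s k).1.den : ℝ) ^ (-τ) := Real.rpow_pos_of_pos (by linarith) _
      have h3 : 0 < ((s k).1.den : ℝ) ^ (-(τ * (τ - 2))) := Real.rpow_pos_of_pos (by linarith) _
      nlinarith [mul_pos (mul_pos hC0 h3) h2]
    · exact isCompact_Icc
    · intro k; exact isClosed_Icc
  rw [mem_iInter] at hx
  have hxE : x ∈ ESet (fun q : ℝ => q ^ (-τ)) (fun q : ℝ => C * q ^ (-(τ * (τ - 2)))) := by
    refine ⟨?_, (s 0).1.den, ?_⟩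
    · refine infinite_of_injective_forall_mem (f := fun k => ((s k).1.num, (s k).1.den)) ?_ ?_
      · intro i j hij
        exact hmono.injective (congrArg Prod.snd hij)
      · intro k
        refine ⟨(s k).1.den_pos, ?_⟩
        have h1 := sub_mem_of_mem_window (hlarge k) (hx k)
        have h2 : 0 < ((s k).1.den : ℝ) ^ (-τ) :=
          Real.rpow_pos_of_pos (by linarith [(hlarge k).one_le]) _
        simp only
        rw [← Rat.cast_def, abs_le]
        constructor <;> linarith [h1.1, h1.2]
    · intro r hr p
      obtain ⟨k, hk1, hk2⟩ : ∃ k, (s k).1.den ≤ r ∧ r < (s (k + 1)).1.den := by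
        have hex : ∃ k, r < (s k).1.den := ⟨r + 1, (hmono.le_apply (x := r + 1))⟩
        have h0 : Nat.find hex ≠ 0 := by
          intro h0
          have := Nat.find_spec hex
          rw [h0] at this
          omega
        obtain ⟨k, hk⟩ := Nat.exists_eq_succ_of_ne_zero h0
        exact ⟨k, not_lt.1 (Nat.find_min hex (by omega)), by
          have := Nat.find_spec hex; rwa [hk] at this⟩
      rw [hs] at hk2
      have hxk := hx (k + 1)
      rw [hs] at hxk
      exact hsafe (s k) k x hxk r hk1 hk2 p
  obtain ⟨k, hk⟩ := hc hxE
  have hxk := hx (k + 1)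
  rw [hs, ← hk] at hxk
  exact hmiss _ _ hxk
end

section
/- Let Ψ : (0,∞) → (0,∞) and ω : (0,∞) → (0,1) be such that lim_{q→∞} q²Ψ(q) = 0, lim_{q→∞} ω(q) = 0, the map q ↦ q²Ψ(q) is non-increasing on (0,∞), and Ψ satisfies the square divisibility condition. If ω(q) < ((1 − ω(1/Ψ(q)))/Ψ(q)) · Ψ(1/Ψ(q)) for all sufficiently large q, then E(Ψ,ω) = ∅. -/
/-!
If `|x - p/q| ≤ Ψ(q)` with `q` large and `x ∈ E(Ψ, ω)`, then `x` lies within `ω(q)Ψ(q)` of one of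
the two endpoints `p/q ± Ψ(q)`. By square divisibility `N = 1/Ψ(q) = q²k` is an integer divisible
by `q`, so these endpoints are the rationals `(pqk ± 1)/N`. The smallness hypothesis on `ω` reads
`ω(q)Ψ(q) < (1 - ω(N))Ψ(N)`, so this rational approximates `x` better than membership in `E(Ψ, ω)`
permits at the denominator `N ≥ q`. Arbitrarily large `q` are available by
`exists_large_of_mem_WSet`, since each denominator admits only finitely many numerators.
-/

open Filter Set

/-- `Ψ` satisfies the *square divisibility condition*: for every positive integer `q`,
`Ψ(q)⁻¹` is a positive integer divisible by `q²`. -/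
def SquareDivisibility (Ψ : ℝ → ℝ) : Prop :=
  ∀ q : ℕ, 0 < q → ∃ k : ℕ, 0 < k ∧ (Ψ (q : ℝ))⁻¹ = (q : ℝ) ^ 2 * (k : ℝ)

theorem exists_large_of_mem_WSet {Ψ : ℝ → ℝ} {x : ℝ} (hx : x ∈ WSet Ψ) (Q : ℕ) :
    ∃ (p : ℤ) (q : ℕ), Q ≤ q ∧ 0 < q ∧ |x - (p : ℝ) / (q : ℝ)| ≤ Ψ (q : ℝ) := by
  by_contra! hcon
  apply hx
  have hfin : (⋃ q ∈ Set.Iio Q, (Set.Icc ⌈(x - Ψ (q : ℝ)) * q⌉ ⌊(x + Ψ (q : ℝ)) * q⌋) ×ˢ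
      ({q} : Set ℕ)).Finite :=
    (Set.finite_Iio Q).biUnion fun q _ => (Set.finite_Icc _ _).prod (Set.finite_singleton q)
  refine hfin.subset ?_
  rintro ⟨p, q⟩ ⟨hq, hpq⟩
  dsimp only at hq hpq
  have hqQ : q < Q := by
    by_contra h
    exact absurd hpq (not_le.mpr (hcon p q (not_lt.mp h) hq))
  have hq' : (0 : ℝ) < q := by exact_mod_cast hq
  have hab := abs_le.mp hpq
  have h1 : (x - Ψ (q : ℝ)) * q ≤ p := (le_div_iff₀ hq').mp (by linarith)
  have h2 : (p : ℝ) ≤ (x + Ψ (q : ℝ)) * q := (div_le_iff₀ hq').mp (by linarith)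
  simp only [Set.mem_iUnion]
  exact ⟨q, hqQ, ⟨Int.ceil_le.mpr h1, Int.le_floor.mpr h2⟩, rfl⟩

/-- **Theorem.** Suppose `q²Ψ(q) → 0`, `ω(q) → 0`, `q ↦ q²Ψ(q)` is non-increasing on `(0,∞)`,
`ω` maps `(0,∞)` into `(0,1)`, and `Ψ` satisfies the square divisibility condition.  If
`ω(q) < ((1 − ω(1/Ψ(q)))/Ψ(q))·Ψ(1/Ψ(q))` for all sufficiently large `q`, then `E(Ψ,ω) = ∅`. -/
theorem ESet_eq_empty_of_sqDiv (Ψ ω : ℝ → ℝ)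
    (hΨpos : ∀ q : ℝ, 0 < q → 0 < Ψ q)
    (hωmem : ∀ q : ℝ, 0 < q → ω q ∈ Set.Ioo (0 : ℝ) 1)
    (hΨlim : Filter.Tendsto (fun q : ℝ => q ^ 2 * Ψ q) Filter.atTop (nhds 0))
    (hωlim : Filter.Tendsto ω Filter.atTop (nhds 0))
    (hmono : AntitoneOn (fun q : ℝ => q ^ 2 * Ψ q) (Set.Ioi 0))
    (hsq : SquareDivisibility Ψ)
    (hsmall : ∀ᶠ q : ℝ in Filter.atTop,
      ω q < (1 - ω (1 / Ψ q)) / Ψ q * Ψ (1 / Ψ q)) :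
    ESet Ψ ω = ∅ := by
  rw [Set.eq_empty_iff_forall_notMem]
  rintro x ⟨hxW, Q, hQ⟩
  obtain ⟨R, hR⟩ := eventually_atTop.mp hsmall
  obtain ⟨p, q, hqge, hq, hpq⟩ := exists_large_of_mem_WSet hxW (max Q ⌈R⌉₊)
  have hq' : (0 : ℝ) < q := by exact_mod_cast hq
  have hω := hR q ((Nat.le_ceil R).trans (by exact_mod_cast (le_max_right _ _).trans hqge))
  have hlow := hQ q ((le_max_left _ _).trans hqge) p
  have hΨ := hΨpos q hq'
  obtain ⟨k, hk, hkeq⟩ := hsq q hq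
  have hk' : (0 : ℝ) < k := by exact_mod_cast hk
  have hN : 1 / Ψ (q : ℝ) = ((q ^ 2 * k : ℕ) : ℝ) := by
    rw [one_div, hkeq]
    push_cast
    ring
  have hΨeq : Ψ (q : ℝ) = 1 / ((q : ℝ) ^ 2 * k) := by rw [← hkeq, one_div, inv_inv]
  have hqN : q ≤ q ^ 2 * k := by nlinarith [Nat.mul_le_mul hq hk]
  have hfar := hQ (q ^ 2 * k) (((le_max_left _ _).trans hqge).trans hqN)
  rw [hN, div_mul_eq_mul_div, lt_div_iff₀ hΨ] at hω
  -- The endpoints `p/q ± Ψ(q)` are rationals with denominator `N = q²k`.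
  have hplus : ((p * q * k + 1 : ℤ) : ℝ) / ((q ^ 2 * k : ℕ) : ℝ) = p / q + Ψ (q : ℝ) := by
    rw [hΨeq]
    push_cast
    field_simp
  have hminus : ((p * q * k - 1 : ℤ) : ℝ) / ((q ^ 2 * k : ℕ) : ℝ) = p / q - Ψ (q : ℝ) := by
    rw [hΨeq]
    push_cast
    field_simp
  have hfar₁ := hfar (p * q * k + 1)
  have hfar₂ := hfar (p * q * k - 1)
  rw [hplus] at hfar₁
  rw [hminus] at hfar₂
  rcases le_total 0 (x - (p : ℝ) / q) with h | h
  · rw [abs_of_nonneg h] at hpq hlow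
    rw [abs_of_nonpos (by linarith)] at hfar₁
    linarith
  · rw [abs_of_nonpos h] at hpq hlow
    rw [abs_of_nonneg (by linarith)] at hfar₂
    linarith
end

section
/- Let Ψ : (0,∞) → (0,∞) and ω : (0,∞) → (0,1) be such that lim_{q→∞} q²Ψ(q) = 0, lim_{q→∞} ω(q) = 0, the map q ↦ q²Ψ(q) is non-increasing on (0,∞), and Ψ satisfies the square divisibility condition. If there exists c ∈ (0,1) such that ω(q) < (c/Ψ(q)) · Ψ(1/Ψ(q)) for all sufficiently large q, then E(Ψ,ω) = ∅. -/
/-!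
Let `x ∈ E(Ψ, ω)` and let `p/q` with `q` large satisfy `|x - p/q| ≤ Ψ(q)`. Since also
`|x - p/q| ≥ (1 - ω(q)) Ψ(q)`, the point `x` lies within `ω(q) Ψ(q)` of one of the two endpoints
`p/q ± Ψ(q)`. By square divisibility `N = 1/Ψ(q)` is a multiple of `q`, so this endpoint is a
rational `P/N`. Hence `|x - P/N| ≤ ω(q) Ψ(q) < c Ψ(N)`, while membership in `E(Ψ, ω)` gives
`|x - P/N| ≥ (1 - ω(N)) Ψ(N)`. As `N ≥ q` is large, `ω(N) < 1 - c`, a contradiction.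
-/

open Filter Set

/-- A `Ψ`-approximable number has approximations of arbitrarily large denominator: each
denominator admits only finitely many numerators. -/
lemma WSet.exists_large {Ψ : ℝ → ℝ} {x : ℝ} (hx : x ∈ WSet Ψ) (M : ℕ) :
    ∃ (p : ℤ) (q : ℕ), M ≤ q ∧ 0 < q ∧ |x - (p : ℝ) / (q : ℝ)| ≤ Ψ (q : ℝ) := by
  by_contra! hcon
  refine hx (Set.Finite.subset (s := ⋃ q ∈ Set.Iio M,
    (Set.Icc ⌈(q : ℝ) * (x - Ψ q)⌉ ⌊(q : ℝ) * (x + Ψ q)⌋).image fun p : ℤ => (p, q)) ?_ ?_)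
  · exact (Set.finite_Iio M).biUnion fun q _ => (Set.finite_Icc _ _).image _
  · rintro ⟨p, q⟩ ⟨hq, hpq⟩
    simp only at hq hpq
    have hqM : q < M := by
      by_contra! h
      exact absurd hpq (not_le.mpr (hcon p q h hq))
    have hq_pos : (0 : ℝ) < q := by exact_mod_cast hq
    have hp : (q : ℝ) * (p / q) = p := by field_simp
    obtain ⟨h1, h2⟩ := abs_le.mp hpq
    refine Set.mem_biUnion (Set.mem_Iio.mpr hqM) ⟨p, ⟨Int.ceil_le.mpr ?_, Int.le_floor.mpr ?_⟩, rfl⟩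
    · rw [← hp]
      exact mul_le_mul_of_nonneg_left (by linarith) hq_pos.le
    · rw [← hp]
      exact mul_le_mul_of_nonneg_left (by linarith) hq_pos.le

/-- If `x` is at distance between `(1 - w) r` and `r` from `a`, then it is within `w r` of one of
the endpoints `a ± r`. -/
lemma exists_endpoint_near {x a r w : ℝ} (h1 : (1 - w) * r ≤ |x - a|) (h2 : |x - a| ≤ r) :
    ∃ s : ℤ, |x - (a + s * r)| ≤ w * r := by
  rcases le_total 0 (x - a) with h | h
  · rw [abs_of_nonneg h] at h1 h2
    refine ⟨1, ?_⟩
    push_cast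
    rw [abs_le]
    constructor <;> linarith
  · rw [abs_of_nonpos h] at h1 h2
    refine ⟨-1, ?_⟩
    push_cast
    rw [abs_le]
    constructor <;> linarith

/-- **Theorem.** Suppose `q²Ψ(q) → 0`, `ω(q) → 0`, `q ↦ q²Ψ(q)` is non-increasing on `(0,∞)`,
`ω` maps `(0,∞)` into `(0,1)`, and `Ψ` satisfies the square divisibility condition.  If there
is `c ∈ (0,1)` with `ω(q) < (c/Ψ(q))·Ψ(1/Ψ(q))` for all sufficiently large `q`, then
`E(Ψ,ω) = ∅`. -/
theorem ESet_eq_empty_of_sqDiv' (Ψ ω : ℝ → ℝ)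
    (hΨpos : ∀ q : ℝ, 0 < q → 0 < Ψ q)
    (hωmem : ∀ q : ℝ, 0 < q → ω q ∈ Set.Ioo (0 : ℝ) 1)
    (hΨlim : Filter.Tendsto (fun q : ℝ => q ^ 2 * Ψ q) Filter.atTop (nhds 0))
    (hωlim : Filter.Tendsto ω Filter.atTop (nhds 0))
    (hmono : AntitoneOn (fun q : ℝ => q ^ 2 * Ψ q) (Set.Ioi 0))
    (hsq : SquareDivisibility Ψ)
    (c : ℝ) (hc : c ∈ Set.Ioo (0 : ℝ) 1)
    (hsmall : ∀ᶠ q : ℝ in Filter.atTop, ω q < c / Ψ q * Ψ (1 / Ψ q)) :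
    ESet Ψ ω = ∅ := by
  rw [Set.eq_empty_iff_forall_notMem]
  rintro x ⟨hxW, Q, hQ⟩
  obtain ⟨A, hA⟩ := eventually_atTop.mp hsmall
  obtain ⟨B, hB⟩ := eventually_atTop.mp
    (hωlim.eventually (gt_mem_nhds (show (0 : ℝ) < 1 - c by linarith [hc.2])))
  obtain ⟨p, q, hMq, hq, hpq⟩ := WSet.exists_large hxW (max Q (max ⌈A⌉₊ ⌈B⌉₊))
  simp only [max_le_iff, Nat.ceil_le] at hMq
  obtain ⟨hQq, hAq, hBq⟩ := hMq
  have hq_pos : (0 : ℝ) < q := by exact_mod_cast hq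
  have hΨq := hΨpos q hq_pos
  obtain ⟨s, hs⟩ := exists_endpoint_near (hQ q hQq p) hpq
  obtain ⟨k, hk, hΨk⟩ := hsq q hq
  have hk_pos : (0 : ℝ) < k := by exact_mod_cast hk
  obtain ⟨N, hN⟩ : ∃ N : ℕ, N = q ^ 2 * k := ⟨_, rfl⟩
  have hNΨ : 1 / Ψ q = (N : ℝ) := by rw [one_div, hΨk, hN]; push_cast; rfl
  have hqN : q ≤ N := by rw [hN]; nlinarith [Nat.mul_pos hq hk]
  have hqN_real : (q : ℝ) ≤ N := by exact_mod_cast hqN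
  have hΨN := hΨpos N (hq_pos.trans_le hqN_real)
  -- The endpoint `p / q + s Ψ(q)` is the fraction `(p q k + s) / N`.
  have hP : ((p * q * k + s : ℤ) : ℝ) / (N : ℝ) = p / q + s * Ψ q := by
    have hΨ : Ψ q = 1 / ((q : ℝ) ^ 2 * k) := by rw [← hΨk]; simp
    rw [hΨ, hN]
    push_cast
    field_simp
  have hlow := hQ N (hQq.trans hqN) (p * q * k + s)
  rw [hP] at hlow
  have hωq := hA q hAq
  rw [hNΨ] at hωq
  have hup : ω q * Ψ q < c * Ψ N := by
    have := mul_lt_mul_of_pos_right hωq hΨq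
    rwa [show c / Ψ q * Ψ N * Ψ q = c * Ψ N by field_simp] at this
  have hωN := hB N (hBq.trans hqN_real)
  nlinarith
end

section
/- Let Ψ : (0,∞) → (0,∞) and ω : (0,∞) → (0,1) be such that lim_{q→∞} q²Ψ(q) = 0, lim_{q→∞} ω(q) = 0, the map q ↦ q²Ψ(q) is non-increasing on (0,∞), and Ψ satisfies the square divisibility condition. If ω(q) ≥ (45/(16Ψ(q))) · Ψ(1/(8Ψ(q))) for all sufficiently large q, then E(Ψ,ω) is non-empty; moreover it is uncountable. -/
/-!
Call `z` *robust* (`Robust Ψ ω Q`) if for some `η > 0` the inequality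
`|z - a/b| ≥ (1 - ω b) Ψ b + η / b²` holds for all `b ≥ Q` and all `a`. A robust number is badly
approximable, and since the non-strict inequality survives limits, every point `x` of the closure
of the set of robust numbers satisfies `|x - a/b| ≥ (1 - ω b) Ψ b` for all `b ≥ Q`. Hence it is
enough to show (`step`) that arbitrarily close to a robust `z` there is a robust `z' ≠ z` with
`|z' - p/q| < Ψ q` for some arbitrarily large `q`. The closure is then a nonempty complete space
in which the points of `W(Ψ)` contain a dense `Gδ` set and points are nowhere dense, so by Baire's
theorem no countable set contains all points of the closure lying in `W(Ψ)`.

For `step`, take by Dirichlet a reduced fraction `p/q` with `|z - p/q| ≤ 1/q²` and `q` large. By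
square divisibility `Ψ q = 1/N` with `N = q² k`, and `p/q + Ψ q = P/N` with `P = p q k + 1` is
again reduced. Complete `(P, N)` to a unimodular pair `P s - r N = 1` with `0 ≤ s ≤ N`, and put
`z' = (P T + r)/(N T + s) = P/N - 1/(N D)`, where `D = N T + s` and `T = t + √2` with `t` close to
`1/(N² Ψ N)`. The choice of `t` keeps `z'` just further than `Ψ N` from `P/N`, while the growth
hypothesis on `ω`, together with `Ψ (N/8) ≥ 64 Ψ N`, gives `1/D < ω q`, so that `p/q` is
approximated to within `Ψ q` but not `(1 - ω q) Ψ q`.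

All other fractions `a/b` are at distance at least a constant times `1/b²`, where the constant
depends only on `z`; this beats `Ψ b` once `b` is large (`far_bound`):
* for `b ≪ q` this is inherited from `z`;
* for `q ≪ b ≤ q k / 2` it follows from `|a/b - p/q| ≥ 1/(b q)`;
* for `q k / 2 < b < N`, the inverse of `P` modulo `N` is `1 - p q k`, so a good approximation
  `a/b` of `P/N` yields a good approximation of `p/q` with denominator
  `|b P - a N| < q` (`mirror_bad`), contradicting the badness inherited from `z`;
* for `b ≥ N` the unimodular change of variables reduces it to `√2` (`tail_bad`).
-/

open Filter Set

/-! ### Bad approximability of the building blocks -/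

lemma sqrt_two_bad (u v : ℤ) (hv : v ≠ 0) :
    1 / 4 ≤ |(v : ℝ)| * |(u : ℝ) - v * √2| := by
  have h2 : √2 ^ 2 = 2 := Real.sq_sqrt (by norm_num)
  have hs0 : 0 ≤ √2 := Real.sqrt_nonneg 2
  have hs : √2 < 1.42 := by
    rw [Real.sqrt_lt' (by norm_num)]; norm_num
  have hv1 : (1 : ℝ) ≤ |(v : ℝ)| := by exact_mod_cast Int.one_le_abs hv
  have hne : u ^ 2 - 2 * v ^ 2 ≠ 0 := by
    intro h
    have hi : Irrational √2 := irrational_sqrt_two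
    apply hi
    refine ⟨|(u : ℚ) / v|, ?_⟩
    have : (u : ℝ) ^ 2 = 2 * v ^ 2 := by exact_mod_cast sub_eq_zero.mp h
    have hv' : (v : ℝ) ≠ 0 := by exact_mod_cast hv
    push_cast
    rw [eq_comm, Real.sqrt_eq_iff_mul_self_eq (by norm_num) (abs_nonneg _), abs_mul_abs_self]
    field_simp
    linarith
  have h1 : (1 : ℝ) ≤ |(u : ℝ) - v * √2| * |(u : ℝ) + v * √2| := by
    rw [← abs_mul]
    have : ((u : ℝ) - v * √2) * (u + v * √2) = ((u ^ 2 - 2 * v ^ 2 : ℤ) : ℝ) := by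
      push_cast; linear_combination (- (v : ℝ) ^ 2) * h2
    rw [this]
    exact_mod_cast Int.one_le_abs hne
  have h3 : |(u : ℝ) + v * √2| ≤ |(u : ℝ) - v * √2| + 2.84 * |(v : ℝ)| := by
    have : (u : ℝ) + v * √2 = (u - v * √2) + 2 * √2 * v := by ring
    rw [this]
    refine (abs_add_le _ _).trans ?_
    have : |2 * √2 * (v : ℝ)| = 2 * √2 * |(v : ℝ)| := by
      rw [abs_mul, abs_of_nonneg (by positivity)]
    rw [this]
    nlinarith
  by_contra! hc
  set w := |(u : ℝ) - v * √2|
  have hw0 : 0 ≤ w := abs_nonneg _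
  have hw : w ≤ 1 / 4 := by nlinarith
  nlinarith [mul_le_mul_of_nonneg_left h3 hw0]

/-- The Möbius image `(P t + r)/(N t + s)` of `t = k + √2` is badly approximable with an absolute
constant for denominators `b ≥ N`, the fraction `P/N` excepted. In the basis `(P, N)`, `(r, s)` of
`ℤ²` the vector `(a, b)` has coordinates `u`, `v`, and the numerator of the error is `v t - u`. -/
lemma tail_bad (P N r s : ℤ) (hN : 0 < N) (hs0 : 0 ≤ s) (hsN : s ≤ N) (hdet : P * s - r * N = 1)
    (t : ℝ) (k : ℕ) (ht : t = k + √2) (b a : ℤ) (hb : N ≤ b) (hne : b * P ≠ a * N) :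
    1 / 8 / (b : ℝ) ^ 2 ≤ |(P * t + r) / (N * t + s) - a / b| := by
  have hN' : (1 : ℝ) ≤ N := by exact_mod_cast hN
  have hb' : (N : ℝ) ≤ b := by exact_mod_cast hb
  have hs0' : (0 : ℝ) ≤ s := by exact_mod_cast hs0
  have hsN' : (s : ℝ) ≤ N := by exact_mod_cast hsN
  have hdet' : (P : ℝ) * s - r * N = 1 := by exact_mod_cast hdet
  have ht1 : 1 ≤ t := by
    have : (1 : ℝ) ≤ √2 := by rw [Real.one_le_sqrt]; norm_num
    rw [ht]; linarith [Nat.cast_nonneg (α := ℝ) k]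
  have hD : 0 < N * t + s := by positivity
  set D := N * t + s with hDdef
  set u := a * s - b * r with hu
  set v := b * P - a * N with hvdef
  have hv : v ≠ 0 := sub_ne_zero.mpr hne
  set w := |(v : ℝ) * t - u| with hw
  have hv1 : (1 : ℝ) ≤ |(v : ℝ)| := by exact_mod_cast Int.one_le_abs hv
  have hw0 : 0 ≤ w := abs_nonneg _
  have hvw : 1 / 4 ≤ |(v : ℝ)| * w := by
    have := sqrt_two_bad (u - v * k) v hv
    rw [hw, ht, abs_sub_comm]
    convert this using 3
    push_cast; ring
  have hbval : (b : ℝ) = v * D - N * (v * t - u) := by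
    simp only [hDdef, hu, hvdef]; push_cast
    linear_combination (-(b : ℝ)) * hdet'
  have hbv : |(v : ℝ)| * D - N * w ≤ b := by
    have h1 : |(v : ℝ) * D| = |(v : ℝ)| * D := by rw [abs_mul, abs_of_pos hD]
    have h2 : |(N : ℝ) * (v * t - u)| = N * w := by rw [abs_mul, abs_of_pos (by linarith)]
    have h3 : (v : ℝ) * D = b + N * (v * t - u) := by linarith
    have h4 := abs_add_le (b : ℝ) (N * (v * t - u))
    rw [← h3, h1, h2, abs_of_nonneg (by linarith : (0 : ℝ) ≤ b)] at h4
    linarith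
  have key : D / 8 ≤ b * w := by
    rcases le_or_gt w (t * |(v : ℝ)| / 2) with h | h
    · have h1 : N * w ≤ D * |(v : ℝ)| / 2 := by
        have : N * w ≤ N * (t * |(v : ℝ)| / 2) := by gcongr
        have : 0 ≤ s * |(v : ℝ)| := by positivity
        simp only [hDdef]; nlinarith
      have h2 : D * |(v : ℝ)| / 2 ≤ b := by linarith
      have h3 : D * |(v : ℝ)| / 2 * w ≤ b * w := by gcongr
      nlinarith
    · have h1 : t / 2 ≤ w := by nlinarith
      have h2 : N * (t / 2) ≤ b * w := by gcongr; linarith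
      have : (N : ℝ) ≤ N * t := by nlinarith
      simp only [hDdef]; linarith
  have hb0 : (0 : ℝ) < b := by linarith
  have hval : (P * t + r) / D - a / b = (v * t - u) / (D * b) := by
    rw [div_sub_div _ _ hD.ne' hb0.ne']
    congr 1
    simp only [hDdef, hu, hvdef]; push_cast; ring
  rw [hval, abs_div, abs_of_pos (by positivity : 0 < D * b), div_le_div_iff₀ (by positivity) (by positivity)]
  change 1 / 8 * (D * b) ≤ w * (b : ℝ) ^ 2
  nlinarith

/-- If `p/q` is badly approximable by fractions with denominator below `q`, then
`P/N = p/q + 1/(q² k)` is badly approximable by `a/b` with `b > q k / 2`. With `c = b P - a N`, the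
congruence `(1 + p q k)(1 - p q k) ≡ 1` modulo `q² k` yields `b - c = q k (q j - c p)`, so a small
`b |c|` makes `j/c` a good approximation of `p/q`. -/
lemma mirror_bad (p q k : ℤ) (hq : 0 < q) (hk : 2 ≤ k) (δ : ℝ) (hδ1 : δ ≤ 1)
    (hbad : ∀ c : ℤ, c ≠ 0 → |c| < q → ∀ j : ℤ, δ * q ≤ |(c : ℝ)| * |(c : ℝ) * p - q * j|)
    (a b : ℤ) (hb : q * k < 2 * b) (hc : b * (p * q * k + 1) - a * (q ^ 2 * k) ≠ 0) :
    δ * (q ^ 2 * k : ℝ) / 2 ≤ b * |((b * (p * q * k + 1) - a * (q ^ 2 * k) : ℤ) : ℝ)| := by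
  set c := b * (p * q * k + 1) - a * (q ^ 2 * k) with hcdef
  have hqb : q < b := by nlinarith
  have hq' : (0 : ℝ) < q := by exact_mod_cast hq
  have hk' : (2 : ℝ) ≤ k := by exact_mod_cast hk
  have hb' : (q * k : ℝ) < 2 * b := by exact_mod_cast hb
  have hb0 : (0 : ℝ) < b := by exact_mod_cast hq.trans hqb
  rcases le_or_gt q |c| with h | h
  · have h' : (q : ℝ) ≤ |(c : ℝ)| := by exact_mod_cast h
    have h1 : (q * k / 2 : ℝ) * q ≤ b * |(c : ℝ)| := by gcongr; linarith
    have h2 : δ * (q ^ 2 * k : ℝ) ≤ 1 * (q ^ 2 * k : ℝ) := by gcongr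
    nlinarith
  · set j := b * p ^ 2 * k + a * (1 - p * q * k) with hj
    have hid : b - c = q * k * (q * j - c * p) := by rw [hj, hcdef]; ring
    have hid' : (b : ℝ) - c = q * k * (q * j - c * p) := by exact_mod_cast hid
    have h1 := hbad c hc h j
    have hcb : |(c : ℝ)| ≤ b := by exact_mod_cast (h.trans hqb).le
    have h2 : q * k * |(c : ℝ) * p - q * j| ≤ 2 * b := by
      have : q * k * |(c : ℝ) * p - q * j| = |(b : ℝ) - c| := by
        rw [hid', abs_mul, abs_of_pos (a := (q * k : ℝ)) (by positivity), abs_sub_comm]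
      rw [this]
      refine (abs_sub _ _).trans ?_
      rw [abs_of_pos hb0]; linarith
    have h3 : q * k * (δ * q) ≤ q * k * (|(c : ℝ)| * |(c : ℝ) * p - q * j|) := by gcongr
    have h4 : |(c : ℝ)| * (q * k * |(c : ℝ) * p - q * j|) ≤ |(c : ℝ)| * (2 * b) := by gcongr
    nlinarith

/-- Dirichlet approximations of a badly approximable number have unbounded denominators. -/
lemma exists_approx (z η : ℝ) (hη : 0 < η)
    (hz : ∀ b : ℕ, 1 ≤ b → ∀ a : ℤ, η / (b : ℝ) ^ 2 ≤ |z - a / b|) (M : ℕ) :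
    ∃ (p : ℤ) (q : ℕ), M ≤ q ∧ 1 ≤ q ∧ IsCoprime p (q : ℤ) ∧ |z - p / q| ≤ 1 / (q : ℝ) ^ 2 := by
  obtain ⟨n, hn⟩ := exists_nat_gt (M / η)
  obtain ⟨x, hx, hxn⟩ := Real.exists_rat_abs_sub_le_and_den_le z (Nat.succ_pos n)
  have hd : (0 : ℝ) < x.den := by exact_mod_cast x.den_pos
  have hxv : ((x : ℚ) : ℝ) = (x.num : ℝ) / x.den := by exact_mod_cast (Rat.num_div_den x).symm
  rw [hxv] at hx
  have hxn' : (x.den : ℝ) ≤ n + 1 := by exact_mod_cast hxn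
  refine ⟨x.num, x.den, ?_, x.den_pos, ?_, ?_⟩
  · have h1 := (hz x.den x.den_pos x.num).trans hx
    rw [div_le_div_iff₀ (by positivity) (by positivity)] at h1
    push_cast at h1
    rw [div_lt_iff₀ hη] at hn
    have : (M : ℝ) ≤ x.den := by
      by_contra! hc
      nlinarith
    exact_mod_cast this
  · rw [Int.isCoprime_iff_gcd_eq_one, Int.gcd, Int.natAbs_natCast]
    exact x.reduced
  · refine hx.trans ?_
    apply one_div_le_one_div_of_le (by positivity)
    push_cast
    nlinarith

/-- The fraction `p/q` inherits bad approximability from `z`, up to a factor `2`, for denominators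
`|c| < q`: from the triangle inequality if `|c| ≤ δ q`, and from `c p ≠ q j` otherwise. -/
lemma conv_bad (z δ : ℝ) (p q : ℤ) (hδ0 : 0 < δ) (hδ : δ ≤ 1 / 2) (hq : 0 < q)
    (hcop : IsCoprime p q)
    (hz : ∀ b : ℤ, 0 < b → ∀ a : ℤ, 2 * δ / (b : ℝ) ^ 2 ≤ |z - a / b|)
    (hpq : |z - p / q| ≤ 1 / (q : ℝ) ^ 2)
    (c : ℤ) (hc : c ≠ 0) (hcq : |c| < q) (j : ℤ) :
    δ * q ≤ |(c : ℝ)| * |(c : ℝ) * p - q * j| := by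
  wlog hc0 : 0 < c generalizing c j
  · have := this (-c) (neg_ne_zero.mpr hc) (by rwa [abs_neg]) (-j) (by omega)
    push_cast at this
    rw [abs_neg, show -(c : ℝ) * p - q * -j = -(c * p - q * j) by ring, abs_neg] at this
    exact this
  rw [abs_of_pos hc0] at hcq
  have hc0' : (0 : ℝ) < c := by exact_mod_cast hc0
  have hq' : (0 : ℝ) < q := by exact_mod_cast hq
  rw [abs_of_pos hc0']
  rcases le_or_gt (c : ℝ) (δ * q) with h | h
  · have h1 := hz c hc0 j
    have h2 : |z - (j : ℝ) / c| ≤ |z - p / q| + |(p : ℝ) / q - j / c| := abs_sub_le _ _ _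
    have h3 : |(p : ℝ) / q - j / c| = |(c : ℝ) * p - q * j| / (q * c) := by
      rw [div_sub_div _ _ hq'.ne' hc0'.ne', abs_div, abs_of_pos (by positivity : (q * c : ℝ) > 0),
        mul_comm (p : ℝ)]
    have h4 : 1 / (q : ℝ) ^ 2 ≤ δ / (c : ℝ) ^ 2 := by
      rw [div_le_div_iff₀ (by positivity) (by positivity)]
      have : (c : ℝ) ^ 2 ≤ (δ * q) ^ 2 := by gcongr
      nlinarith [mul_pos hδ0 (pow_pos hq' 2)]
    have h5 : δ / (c : ℝ) ^ 2 ≤ |(c : ℝ) * p - q * j| / (q * c) := by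
      have : 2 * δ / (c : ℝ) ^ 2 = δ / (c : ℝ) ^ 2 + δ / (c : ℝ) ^ 2 := by ring
      linarith
    rw [div_le_div_iff₀ (by positivity) (by positivity)] at h5
    nlinarith
  · have hne : c * p - q * j ≠ 0 := by
      intro h0
      have : q ∣ c * p := ⟨j, by linarith⟩
      have := hcop.symm.dvd_of_dvd_mul_right this
      exact absurd (Int.le_of_dvd hc0 this) (by omega)
    have : (1 : ℝ) ≤ |(c : ℝ) * p - q * j| := by exact_mod_cast Int.one_le_abs hne
    nlinarith

/-- The lower bound for `|z' - a/b|` over all fractions `a/b`, except `p/q` written with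
a denominator `b ≤ q k / 2`, and `P/N`. -/
lemma far_bound (z z' δ : ℝ) (p q k : ℤ) (hδ0 : 0 < δ) (hδ : δ ≤ 1 / 2) (hq : 0 < q) (hk : 2 ≤ k)
    (hcop : IsCoprime p q)
    (hz : ∀ b : ℤ, 0 < b → ∀ a : ℤ, 2 * δ / (b : ℝ) ^ 2 ≤ |z - a / b|)
    (hpq : |z - p / q| ≤ 1 / (q : ℝ) ^ 2)
    (hz'p : |z' - p / q| ≤ 1 / ((q : ℝ) ^ 2 * k))
    (hz'P : |z' - (p * q * k + 1 : ℤ) / (q ^ 2 * k : ℤ)| ≤ δ / 4 / ((q : ℝ) ^ 2 * k) ^ 2)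
    (htail : ∀ b a : ℤ, q ^ 2 * k ≤ b → b * (p * q * k + 1) ≠ a * (q ^ 2 * k) →
      1 / 8 / (b : ℝ) ^ 2 ≤ |z' - a / b|)
    (b a : ℤ) (hb : 0 < b) (h1 : b * p = a * q → q * k < 2 * b)
    (h2 : b * (p * q * k + 1) ≠ a * (q ^ 2 * k)) :
    δ / 4 / (b : ℝ) ^ 2 ≤ |z' - a / b| := by
  have hb' : (0 : ℝ) < b := by exact_mod_cast hb
  have hq' : (0 : ℝ) < q := by exact_mod_cast hq
  have hk' : (2 : ℝ) ≤ k := by exact_mod_cast hk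
  have hk0 : (0 : ℝ) < k := by linarith
  rcases le_or_gt (q ^ 2 * k) b with hbN | hbN
  · refine le_trans ?_ (htail b a hbN h2)
    exact div_le_div_of_nonneg_right (by linarith) (by positivity)
  rcases le_or_gt (b : ℝ) (δ * q) with hbs | hbs
  · have e1 := hz b hb a
    have e2 : |z - (a : ℝ) / b| ≤ |z - z'| + |z' - a / b| := abs_sub_le _ _ _
    have e3 : |z - z'| ≤ |z - p / q| + |z' - p / q| := by
      have := abs_sub_le z (p / q : ℝ) z'
      rwa [abs_sub_comm (p / q : ℝ) z'] at this
    have e4 : 1 / ((q : ℝ) ^ 2 * k) ≤ 1 / 2 * (1 / (q : ℝ) ^ 2) := by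
      rw [← one_div_mul_one_div, mul_comm (1 / 2 : ℝ)]
      gcongr
    have e5 : 1 / (q : ℝ) ^ 2 ≤ δ / 2 / (b : ℝ) ^ 2 := by
      rw [div_le_div_iff₀ (by positivity) (by positivity)]
      have : (b : ℝ) ^ 2 ≤ (δ * q) ^ 2 := by gcongr
      nlinarith [mul_pos hδ0 (pow_pos hq' 2)]
    have e6 : 2 * δ / (b : ℝ) ^ 2 = 4 * (δ / 2 / (b : ℝ) ^ 2) := by ring
    have e7 : δ / 4 / (b : ℝ) ^ 2 = 1 / 2 * (δ / 2 / (b : ℝ) ^ 2) := by ring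
    have e8 : 0 < δ / 2 / (b : ℝ) ^ 2 := by positivity
    linarith
  rcases lt_or_ge (q * k) (2 * b) with hbm | hbm
  · have hc : b * (p * q * k + 1) - a * (q ^ 2 * k) ≠ 0 := sub_ne_zero.mpr h2
    have e1 := mirror_bad p q k hq hk δ (by linarith)
      (conv_bad z δ p q hδ0 hδ hq hcop hz hpq) a b hbm hc
    set c := b * (p * q * k + 1) - a * (q ^ 2 * k) with hcdef
    have e2 : ((p * q * k + 1 : ℤ) : ℝ) / (q ^ 2 * k : ℤ) - a / b = c / ((q ^ 2 * k) * b) := by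
      push_cast
      rw [div_sub_div _ _ (by positivity) hb'.ne', hcdef]
      congr 1
      push_cast; ring
    have e3 : δ / 2 / (b : ℝ) ^ 2 ≤ |((p * q * k + 1 : ℤ) : ℝ) / (q ^ 2 * k : ℤ) - a / b| := by
      rw [e2, abs_div, abs_of_pos (by positivity : (0 : ℝ) < (q ^ 2 * k) * b),
        div_le_div_iff₀ (by positivity) (by positivity)]
      nlinarith
    have e4 := abs_sub_le (((p * q * k + 1 : ℤ) : ℝ) / (q ^ 2 * k : ℤ)) z' (a / b)
    rw [abs_sub_comm _ z'] at e4
    have e5 : δ / 4 / ((q : ℝ) ^ 2 * k) ^ 2 ≤ δ / 4 / (b : ℝ) ^ 2 := by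
      have : (b : ℝ) ≤ (q : ℝ) ^ 2 * k := by exact_mod_cast hbN.le
      gcongr
    have e6 : δ / 2 / (b : ℝ) ^ 2 = δ / 4 / (b : ℝ) ^ 2 + δ / 4 / (b : ℝ) ^ 2 := by ring
    linarith
  · have hne : b * p - a * q ≠ 0 := fun h => absurd (h1 (by linarith)) (by omega)
    have hbm' : 2 * (b : ℝ) ≤ q * k := by exact_mod_cast hbm
    have e1 : 1 / ((q : ℝ) * b) ≤ |(p : ℝ) / q - a / b| := by
      rw [div_sub_div _ _ hq'.ne' hb'.ne', abs_div, abs_of_pos (by positivity : (q * b : ℝ) > 0)]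
      gcongr
      have := Int.one_le_abs hne
      rw [mul_comm b, mul_comm a] at this
      exact_mod_cast this
    have e2 := abs_sub_le (p / q : ℝ) z' (a / b)
    rw [abs_sub_comm _ z'] at e2
    have e3 : 1 / ((q : ℝ) ^ 2 * k) ≤ 1 / 2 * (1 / (q * b)) := by
      rw [div_mul_div_comm, div_le_div_iff₀ (by positivity) (by positivity)]
      nlinarith
    have e4 : δ / 4 / (b : ℝ) ^ 2 ≤ 1 / 2 * (1 / (q * b)) := by
      rw [div_mul_div_comm, div_le_div_iff₀ (by positivity) (by positivity)]
      nlinarith [mul_pos hq' hb', mul_pos hδ0 (mul_pos hq' hb')]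
    linarith

/-! ### Perturbing a robust number -/

/-- Existence of the point `z = P/N - 1/(N D)` with `D` of size about `N t`, badly approximable by
fractions of denominator `b ≥ N` other than `P/N`. -/
lemma exists_perturb (P N : ℤ) (hN : 0 < N) (hcop : IsCoprime P N) (t : ℕ) :
    ∃ z D : ℝ, (N : ℝ) * t < D ∧ D ≤ N * (t + 5 / 2) ∧ z = P / N - 1 / (N * D) ∧
      ∀ b a : ℤ, N ≤ b → b * P ≠ a * N → 1 / 8 / (b : ℝ) ^ 2 ≤ |z - a / b| := by
  obtain ⟨u, v, huv⟩ := hcop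
  have hs0 : 0 ≤ u % N := Int.emod_nonneg _ hN.ne'
  have hsN : u % N ≤ N := (Int.emod_lt_of_pos _ hN).le
  have hdet : P * (u % N) - (-(v + P * (u / N))) * N = 1 := by
    have := Int.emod_add_mul_ediv u N
    have h : u % N = u - N * (u / N) := by linarith
    rw [h]; linear_combination huv
  set s := u % N
  set r := -(v + P * (u / N))
  have hN' : (0 : ℝ) < N := by exact_mod_cast hN
  have hs0' : (0 : ℝ) ≤ s := by exact_mod_cast hs0
  have hsN' : (s : ℝ) ≤ N := by exact_mod_cast hsN
  have hdet' : (P : ℝ) * s - r * N = 1 := by exact_mod_cast hdet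
  have h1 : (1 : ℝ) ≤ √2 := by rw [Real.one_le_sqrt]; norm_num
  have h2 : √2 < 1.42 := by
    rw [Real.sqrt_lt' (by norm_num)]; norm_num
  have hD : 0 < N * (t + √2) + s := by positivity
  refine ⟨(P * (t + √2) + r) / (N * (t + √2) + s), N * (t + √2) + s, ?_, ?_, ?_, ?_⟩
  · nlinarith
  · nlinarith
  · field_simp
    linear_combination (-1 : ℝ) * hdet'
  · intro b a hb hne
    exact tail_bad P N r s hN hs0 hsN hdet _ t rfl b a hb hne

/-- The numbers satisfying the lower bound in the definition of `ESet` from `Q` on, with an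
additional slack `η / b²` that makes the bound stable under perturbation and makes the number badly
approximable. -/
def Robust (Ψ ω : ℝ → ℝ) (Q : ℕ) : Set ℝ :=
  {z : ℝ | ∃ η : ℝ, 0 < η ∧ ∀ b : ℕ, Q ≤ b → ∀ a : ℤ,
    (1 - ω (b : ℝ)) * Ψ (b : ℝ) + η / (b : ℝ) ^ 2 ≤ |z - (a : ℝ) / (b : ℝ)|}

lemma eventually_small (Ψ : ℝ → ℝ)
    (hΨlim : Filter.Tendsto (fun q : ℝ => q ^ 2 * Ψ q) Filter.atTop (nhds 0)) (e : ℝ) (he : 0 < e) :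
    ∃ B : ℕ, ∀ b : ℕ, B ≤ b → 1 ≤ b → Ψ b ≤ e / (b : ℝ) ^ 2 := by
  have h := (hΨlim.comp tendsto_natCast_atTop_atTop).eventually (gt_mem_nhds he)
  obtain ⟨B, hB⟩ := Filter.eventually_atTop.mp h
  refine ⟨B, fun b hb hb1 => ?_⟩
  have hb' : (0 : ℝ) < b := by exact_mod_cast hb1
  rw [le_div_iff₀ (by positivity), mul_comm]
  exact (hB b hb).le

lemma Psi_mul_le (Ψ : ℝ → ℝ) (hmono : AntitoneOn (fun q : ℝ => q ^ 2 * Ψ q) (Set.Ioi 0))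
    (x j : ℝ) (hx : 0 < x) (hj : 1 ≤ j) : j ^ 2 * Ψ (j * x) ≤ Ψ x := by
  have h := hmono (Set.mem_Ioi.mpr hx) (Set.mem_Ioi.mpr (by positivity : 0 < j * x))
    (by nlinarith : x ≤ j * x)
  have h' : (j * x) ^ 2 * Ψ (j * x) ≤ x ^ 2 * Ψ x := h
  have hx2 : 0 < x ^ 2 := by positivity
  by_contra! hc
  nlinarith [mul_lt_mul_of_pos_left hc hx2]

/-- If a fraction with denominator `q` is at distance `d > (1 - ω q) Ψ q` from a point, and
`d ≥ Ψ q / 2`, then the slack persists for all representations with denominator a multiple of `q`,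
because `Ψ (j q) ≤ Ψ q / 4` for `j ≥ 2`. -/
lemma multiples_slack (Ψ ω : ℝ → ℝ)
    (hΨpos : ∀ q : ℝ, 0 < q → 0 < Ψ q)
    (hωmem : ∀ q : ℝ, 0 < q → ω q ∈ Set.Ioo (0 : ℝ) 1)
    (hmono : AntitoneOn (fun q : ℝ => q ^ 2 * Ψ q) (Set.Ioi 0))
    (q : ℤ) (hq : 0 < q) (d : ℝ) (hd : (1 - ω q) * Ψ q < d) (hd2 : Ψ q / 2 ≤ d) :
    ∃ η : ℝ, 0 < η ∧ ∀ b : ℕ, 0 < b → q ∣ b → (1 - ω b) * Ψ b + η / (b : ℝ) ^ 2 ≤ d := by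
  have hq' : (0 : ℝ) < q := by exact_mod_cast hq
  have hΨq := hΨpos q hq'
  refine ⟨(q : ℝ) ^ 2 * min (d - (1 - ω q) * Ψ q) (Ψ q / 4),
    mul_pos (by positivity) (lt_min (by linarith) (by linarith)), ?_⟩
  rintro b hb ⟨j, hj⟩
  have hb' : (0 : ℝ) < b := by exact_mod_cast hb
  have hbj : (b : ℝ) = j * q := by
    have : ((b : ℤ) : ℝ) = q * j := by exact_mod_cast hj
    rw [mul_comm]; exact_mod_cast this
  have hj0 : 0 < j := by
    have : 0 < q * j := by rw [← hj]; exact_mod_cast hb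
    exact (pos_iff_pos_of_mul_pos this).mp hq
  have hj0' : (1 : ℝ) ≤ j := by exact_mod_cast hj0
  have hmin0 : 0 < min (d - (1 - ω q) * Ψ q) (Ψ q / 4) := lt_min (by linarith) (by linarith)
  have hle : (q : ℝ) ^ 2 * min (d - (1 - ω q) * Ψ q) (Ψ q / 4) / (b : ℝ) ^ 2 ≤
      min (d - (1 - ω q) * Ψ q) (Ψ q / 4) := by
    rw [div_le_iff₀ (by positivity), mul_comm]
    gcongr
    rw [hbj]; nlinarith
  rcases (show 1 ≤ j from hj0).eq_or_lt with h | h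
  · have : (b : ℝ) = q := by rw [hbj, ← h]; simp
    rw [this] at hle ⊢
    linarith [min_le_left (d - (1 - ω q) * Ψ q) (Ψ q / 4)]
  · have hj2 : (2 : ℝ) ≤ j := by exact_mod_cast h
    have h1 := Psi_mul_le Ψ hmono q j hq' hj0'
    rw [← hbj] at h1
    have hΨb := hΨpos b hb'
    have h2 : 4 * Ψ b ≤ Ψ q := by
      have : (2 : ℝ) ^ 2 * Ψ b ≤ (j : ℝ) ^ 2 * Ψ b := by gcongr
      linarith
    have h3 : (1 - ω b) * Ψ b ≤ Ψ b := by nlinarith [(hωmem b hb').1]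
    linarith [min_le_right (d - (1 - ω q) * Ψ q) (Ψ q / 4)]

set_option maxHeartbeats 1600000 in
/-- Arbitrarily close to a robust number there is another one which is approximated by some `p/q`
within `Ψ q`, with `q` arbitrarily large. -/
lemma step (Ψ ω : ℝ → ℝ)
    (hΨpos : ∀ q : ℝ, 0 < q → 0 < Ψ q)
    (hωmem : ∀ q : ℝ, 0 < q → ω q ∈ Set.Ioo (0 : ℝ) 1)
    (hΨlim : Filter.Tendsto (fun q : ℝ => q ^ 2 * Ψ q) Filter.atTop (nhds 0))
    (hmono : AntitoneOn (fun q : ℝ => q ^ 2 * Ψ q) (Set.Ioi 0))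
    (hsq : SquareDivisibility Ψ) (Q : ℕ) (hQ : 1 ≤ Q)
    (hbig : ∀ q : ℕ, Q ≤ q → 45 / (16 * Ψ q) * Ψ (1 / (8 * Ψ q)) ≤ ω q)
    (z : ℝ) (hz : z ∈ Robust Ψ ω Q) (ε : ℝ) (hε : 0 < ε) (M : ℕ) :
    ∃ z' ∈ Robust Ψ ω Q, z' ≠ z ∧ |z' - z| < ε ∧
      ∃ (p : ℤ) (q : ℕ), M ≤ q ∧ 0 < q ∧ |z' - p / q| < Ψ q := by
  obtain ⟨η, hη, hz⟩ := hz
  have hQ' : (1 : ℝ) ≤ Q := by exact_mod_cast hQ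
  obtain ⟨δ, hδ0, hδ, hδη⟩ : ∃ δ : ℝ, 0 < δ ∧ δ ≤ 1 / 2 ∧ 2 * δ * Q ^ 2 ≤ η := by
    refine ⟨min (1 / 2) (η / (2 * Q ^ 2)), by positivity, min_le_left _ _, ?_⟩
    have := min_le_right (1 / 2) (η / (2 * (Q : ℝ) ^ 2))
    rw [le_div_iff₀ (by positivity)] at this
    linarith
  have hbadN : ∀ b : ℕ, 1 ≤ b → ∀ a : ℤ, 2 * δ / (b : ℝ) ^ 2 ≤ |z - a / b| := by
    intro b hb a
    have hb' : (0 : ℝ) < b := by exact_mod_cast hb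
    have h1 := hz (b * Q) (Nat.le_mul_of_pos_left Q hb) (a * Q)
    have h2 : ((a * Q : ℤ) : ℝ) / ((b * Q : ℕ) : ℝ) = a / b := by
      push_cast; field_simp
    rw [h2] at h1
    have hbQ : (0 : ℝ) < ((b * Q : ℕ) : ℝ) := by push_cast; positivity
    have h3 : 0 ≤ (1 - ω ((b * Q : ℕ) : ℝ)) * Ψ ((b * Q : ℕ) : ℝ) :=
      mul_nonneg (by linarith [(hωmem _ hbQ).2]) (hΨpos _ hbQ).le
    have h4 : 2 * δ / (b : ℝ) ^ 2 ≤ η / ((b * Q : ℕ) : ℝ) ^ 2 := by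
      push_cast
      rw [div_le_div_iff₀ (by positivity) (by positivity)]
      nlinarith [mul_le_mul_of_nonneg_right hδη (sq_nonneg (b : ℝ))]
    linarith
  have hbadZ : ∀ b : ℤ, 0 < b → ∀ a : ℤ, 2 * δ / (b : ℝ) ^ 2 ≤ |z - a / b| := by
    intro b hb a
    lift b to ℕ using hb.le
    exact_mod_cast hbadN b (by exact_mod_cast hb) a
  obtain ⟨B, hB⟩ := eventually_small Ψ hΨlim (δ / 8) (by positivity)
  obtain ⟨τ, hτ0, hτε, hτη⟩ : ∃ τ : ℝ, 0 < τ ∧ τ ≤ ε ∧ τ * (B + 1) ^ 2 ≤ η / 2 := by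
    refine ⟨min ε (η / 2 / (B + 1) ^ 2), by positivity, min_le_left _ _, ?_⟩
    have := min_le_right ε (η / 2 / ((B : ℝ) + 1) ^ 2)
    rwa [le_div_iff₀ (by positivity)] at this
  obtain ⟨R, hR⟩ := exists_nat_gt (2 / τ)
  obtain ⟨p, q, hqM, hq1, hcop, hpq⟩ := exists_approx z (2 * δ) (by positivity) hbadN
    (max (max M B) (max Q R))
  simp only [max_le_iff] at hqM
  obtain ⟨⟨hqM, hqB⟩, hqQ, hqR⟩ := hqM
  have hq0 : (1 : ℝ) ≤ q := by exact_mod_cast hq1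
  -- The integer `k = 1 / (n² Ψ n)` of the divisibility condition is large once `n ≥ B`.
  have hquot : ∀ n : ℕ, B ≤ n → 1 ≤ n → ∃ k : ℕ, 0 < k ∧ Ψ n = 1 / ((n : ℝ) ^ 2 * k) ∧ 8 ≤ δ * k := by
    intro n hn hn1
    have hn' : (0 : ℝ) < n := by exact_mod_cast hn1
    obtain ⟨k, hk, hkv⟩ := hsq n hn1
    have hk' : (0 : ℝ) < k := by exact_mod_cast hk
    have hv : Ψ n = 1 / ((n : ℝ) ^ 2 * k) := by rw [← hkv]; simp
    refine ⟨k, hk, hv, ?_⟩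
    have := hB n hn hn1
    rw [hv, div_div, div_le_div_iff₀ (by positivity) (by positivity)] at this
    have hn2 : 0 < (n : ℝ) ^ 2 := by positivity
    by_contra! hc
    nlinarith [mul_lt_mul_of_pos_left hc hn2]
  obtain ⟨k, hk0, hΨq, hk8⟩ := hquot q hqB hq1
  have hk16 : (16 : ℝ) ≤ k := by
    linarith [mul_le_mul_of_nonneg_right hδ (Nat.cast_nonneg (α := ℝ) k)]
  obtain ⟨N, hNdef⟩ : ∃ N : ℕ, N = q ^ 2 * k := ⟨_, rfl⟩
  have hNR : (N : ℝ) = (q : ℝ) ^ 2 * k := by rw [hNdef]; push_cast; ring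
  have hqN : q ≤ N := by 
    rw [hNdef, pow_two, mul_assoc]; exact Nat.le_mul_of_pos_right q (Nat.mul_pos hq1 hk0)
  have hN1 : 1 ≤ N := hq1.trans hqN
  have hN1' : (1 : ℝ) ≤ N := by exact_mod_cast hN1
  obtain ⟨l, hl0, hΨN, hl8⟩ := hquot N (hqB.trans hqN) hN1
  have hl16 : (16 : ℝ) ≤ l := by
    linarith [mul_le_mul_of_nonneg_right hδ (Nat.cast_nonneg (α := ℝ) l)]
  have hl16' : 16 ≤ l := by exact_mod_cast hl16
  rw [← hNR] at hΨq
  obtain ⟨P, hPdef⟩ : ∃ P : ℤ, P = p * q * k + 1 := ⟨_, rfl⟩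
  have hPN : IsCoprime P (N : ℤ) := by
    refine ⟨1 - p * q * k, p ^ 2 * k, ?_⟩
    rw [hPdef, hNdef]; push_cast; ring
  -- The size `l = 1 / (N² Ψ N)` of `D / N` would put `z'` at distance exactly `Ψ N` from `P / N`;
  -- `t = l - 3` makes the distance slightly larger.
  obtain ⟨z', D, hD1, hD2, hz'v, htail⟩ := exists_perturb P N (by exact_mod_cast hN1) hPN (l - 3)
  rw [Nat.cast_sub (by omega)] at hD1 hD2
  push_cast at hD1 hD2 hz'v
  have hDl : (N : ℝ) * l / 2 < D := by
    have : (N : ℝ) * (l / 2) ≤ N * (l - 3) := by gcongr; linarith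
    linarith
  have hD8 : 8 < D := by
    have : (1 : ℝ) * 16 ≤ N * l := by gcongr
    linarith
  have hD0 : 0 < D := by linarith
  have hPNv : (P : ℝ) / N = p / q + 1 / N := by
    rw [hNR, hPdef]; push_cast; field_simp
  have hz'P : z' - P / N = -(1 / (N * D)) := by rw [hz'v]; ring
  have hz'p : z' - p / q = 1 / N * (1 - 1 / D) := by
    rw [hz'v, hPNv]; field_simp; ring
  have hD1inv : 1 / D ≤ 1 / 8 := one_div_le_one_div_of_le (by norm_num) hD8.le
  have hD0inv : 0 < 1 / D := by positivity
  have hNinv : 0 < 1 / (N : ℝ) := by positivity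
  have hz'p_abs : |z' - p / q| = 1 / N * (1 - 1 / D) := by
    rw [hz'p, abs_of_pos (mul_pos hNinv (by linarith))]
  have hz'P_abs : |z' - P / N| = 1 / (N * D) := by
    rw [hz'P, abs_neg, abs_of_pos (by positivity)]
  have hz'lt : |z' - p / q| < Ψ q := by
    rw [hz'p_abs, hΨq]; exact mul_lt_of_lt_one_right hNinv (by linarith)
  -- The growth hypothesis on `ω` enters here, through `1 / (8 Ψ q) = N / 8` and `64 Ψ N ≤ Ψ (N / 8)`.
  have hωq : 1 / D < ω q := by
    refine lt_of_lt_of_le ?_ (hbig q hqQ)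
    have e1 : 1 / (8 * Ψ q) = N / 8 := by rw [hΨq]; field_simp
    have e2 := Psi_mul_le Ψ hmono (N / 8) 8 (by positivity) (by norm_num)
    rw [show (8 : ℝ) * (N / 8) = N by ring, hΨN] at e2
    have e3 : 45 / (16 * Ψ q) = 45 / 16 * N := by rw [hΨq]; field_simp
    rw [e1, e3]
    have e4 : 45 / 16 * (N : ℝ) * (8 ^ 2 * (1 / (N ^ 2 * l))) = 180 / (N * l) := by
      field_simp; norm_num
    have e5 : 1 / D < 180 / (N * l) := by
      rw [div_lt_div_iff₀ hD0 (by positivity)]; linarith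
    calc 1 / D < 45 / 16 * (N : ℝ) * (8 ^ 2 * (1 / (N ^ 2 * l))) := by rw [e4]; exact e5
      _ ≤ _ := by gcongr
  have hqpos : (0 : ℝ) < q := by linarith
  obtain ⟨η₁, hη₁, hslack₁⟩ := multiples_slack Ψ ω hΨpos hωmem hmono q (by exact_mod_cast hq1)
    |z' - p / q| (by
      rw [hz'p_abs]; push_cast; rw [hΨq, mul_comm]
      exact mul_lt_mul_of_pos_left (by linarith) hNinv)
    (by
      rw [hz'p_abs]; push_cast; rw [hΨq]
      have := mul_le_mul_of_nonneg_left (show (1 / 2 : ℝ) ≤ 1 - 1 / D by linarith) hNinv.le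
      linarith)
  have hNpos : (0 : ℝ) < N := by linarith
  have hΨND : Ψ N < 1 / (N * D) := by
    rw [hΨN]
    apply one_div_lt_one_div_of_lt (by positivity)
    rw [pow_two, mul_assoc]
    exact mul_lt_mul_of_pos_left (by linarith) hNpos
  have hΨN0 := hΨpos N hNpos
  obtain ⟨η₂, hη₂, hslack₂⟩ := multiples_slack Ψ ω hΨpos hωmem hmono N (by exact_mod_cast hN1)
    |z' - P / N| (by rw [hz'P_abs]; push_cast; exact (mul_le_of_le_one_left hΨN0.le
      (by linarith [(hωmem N hNpos).1])).trans_lt hΨND)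
    (by rw [hz'P_abs]; push_cast; linarith)
  have hclose : |z' - z| < τ := by
    have e1 : |z' - z| ≤ |z' - p / q| + |z - p / q| := by
      have := abs_sub_le z' (p / q : ℝ) z
      rwa [abs_sub_comm (p / q : ℝ) z] at this
    have e2 : 1 / (q : ℝ) ^ 2 ≤ 1 / q := 
      one_div_le_one_div_of_le hqpos (le_self_pow₀ hq0 (by norm_num))
    have e3 : Ψ q ≤ 1 / q := by
      rw [hΨq]; exact one_div_le_one_div_of_le hqpos (by exact_mod_cast hqN)
    have e4 : 2 * (1 / (q : ℝ)) < τ := by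
      have : 2 / τ < q := hR.trans_le (by exact_mod_cast hqR)
      rw [div_lt_iff₀ hτ0] at this
      rw [mul_one_div, div_lt_iff₀ hqpos]; linarith
    linarith
  have hfar := far_bound z z' δ p q k hδ0 hδ (by exact_mod_cast hq1)
    (by have : 16 ≤ k := by exact_mod_cast hk16
        omega) hcop hbadZ (by push_cast; exact hpq)
    (by push_cast; rw [← hNR, hz'p_abs]; exact mul_le_of_le_one_right hNinv.le (by linarith))
    (by
      rw [← hPdef, show ((q : ℤ) ^ 2 * k) = (N : ℤ) by rw [hNdef]; push_cast; ring]
      push_cast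
      rw [← hNR, hz'P_abs, div_div, div_le_div_iff₀ (by positivity) (by positivity)]
      have : 4 * (N : ℝ) ≤ δ * D := by
        linarith [mul_lt_mul_of_pos_left hDl hδ0, mul_le_mul_of_nonneg_left hl8 hNpos.le]
      linarith [mul_le_mul_of_nonneg_left this hNpos.le])
    (by
      rw [← hPdef, show ((q : ℤ) ^ 2 * k) = (N : ℤ) by rw [hNdef]; push_cast; ring]
      exact htail)
  rw [← hPdef, show ((q : ℤ) ^ 2 * k) = (N : ℤ) by rw [hNdef]; push_cast; ring] at hfar
  refine ⟨z', ⟨min (min (η / 2) (δ / 8)) (min η₁ η₂), by positivity, ?_⟩, ?_,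
    hclose.trans_le hτε, p, q, hqM, hq1, hz'lt⟩
  · intro b hb a
    have hb1 : 1 ≤ b := hQ.trans hb
    have hb' : (0 : ℝ) < b := by exact_mod_cast hb1
    set m := min (min (η / 2) (δ / 8)) (min η₁ η₂)
    have hmle : ∀ y, m ≤ y → m / (b : ℝ) ^ 2 ≤ y / (b : ℝ) ^ 2 := fun y hy => by gcongr
    rcases lt_or_ge b B with hbB | hbB
    · have e1 := hz b hb a
      have e2 := abs_sub_le z z' (a / b : ℝ)
      rw [abs_sub_comm z z'] at e2
      have e3 := hmle (η / 2) ((min_le_left _ _).trans (min_le_left _ _))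
      have e4 : τ ≤ η / 2 / (b : ℝ) ^ 2 := by
        rw [le_div_iff₀ (by positivity)]
        refine le_trans ?_ hτη
        have : (b : ℝ) ≤ B + 1 := by
          have : (b : ℝ) < B := by exact_mod_cast hbB
          linarith
        gcongr
      have e5 : η / (b : ℝ) ^ 2 = η / 2 / (b : ℝ) ^ 2 + η / 2 / (b : ℝ) ^ 2 := by ring
      linarith
    by_cases h1 : (b : ℤ) * p = a * q
    · have hdvd : (q : ℤ) ∣ b := hcop.symm.dvd_of_dvd_mul_right ⟨a, by rw [h1]; ring⟩
      have hval : (a : ℝ) / b = p / q := by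
        rw [div_eq_div_iff hb'.ne' hqpos.ne']
        have : (b : ℝ) * p = a * q := by exact_mod_cast h1
        linarith
      rw [hval]
      have := hslack₁ b hb1 hdvd
      linarith [hmle η₁ ((min_le_right _ _).trans (min_le_left _ _))]
    by_cases h2 : (b : ℤ) * P = a * N
    · have hdvd : (N : ℤ) ∣ b := hPN.symm.dvd_of_dvd_mul_right ⟨a, by rw [h2]; ring⟩
      have hval : (a : ℝ) / b = P / N := by
        rw [div_eq_div_iff hb'.ne' hNpos.ne']
        have : (b : ℝ) * P = a * N := by exact_mod_cast h2
        linarith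
      rw [hval]
      have := hslack₂ b hb1 hdvd
      linarith [hmle η₂ ((min_le_right _ _).trans (min_le_right _ _))]
    have e1 := hfar b a (by exact_mod_cast hb1) (fun h => absurd h h1) h2
    push_cast at e1
    have e2 := hB b hbB hb1
    have e3 := hmle (δ / 8) ((min_le_left _ _).trans (min_le_right _ _))
    have e4 : δ / 4 / (b : ℝ) ^ 2 = δ / 8 / (b : ℝ) ^ 2 + δ / 8 / (b : ℝ) ^ 2 := by ring
    have e5 : (1 - ω b) * Ψ b ≤ Ψ b := 
      mul_le_of_le_one_left (hΨpos b hb').le (by linarith [(hωmem b hb').1])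
    linarith
  · rintro rfl
    have e1 := hbadN q hq1 p
    have e2 := hB q hqB hq1
    have e3 : δ / 8 / (q : ℝ) ^ 2 < 2 * δ / (q : ℝ) ^ 2 := by gcongr; linarith
    linarith

/-- `√2` is robust. -/
lemma robust_nonempty (Ψ ω : ℝ → ℝ)
    (hΨpos : ∀ q : ℝ, 0 < q → 0 < Ψ q)
    (hωmem : ∀ q : ℝ, 0 < q → ω q ∈ Set.Ioo (0 : ℝ) 1) (Q : ℕ) (hQ : 1 ≤ Q)
    (hB : ∀ b : ℕ, Q ≤ b → Ψ b ≤ 1 / 8 / (b : ℝ) ^ 2) : (Robust Ψ ω Q).Nonempty := by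
  refine ⟨√2, 1 / 8, by norm_num, fun b hb a => ?_⟩
  have hb1 : 1 ≤ b := hQ.trans hb
  have hb' : (0 : ℝ) < b := by exact_mod_cast hb1
  have e1 := sqrt_two_bad a b (by omega)
  push_cast at e1
  rw [abs_of_pos hb'] at e1
  have e2 : √2 - a / b = -((a - b * √2) / b) := by field_simp; ring
  have e3 : 1 / 4 / (b : ℝ) ^ 2 ≤ |√2 - a / b| := by
    rw [e2, abs_neg, abs_div, abs_of_pos hb', div_le_div_iff₀ (by positivity) hb']
    nlinarith
  have e5 : (1 - ω b) * Ψ b ≤ Ψ b := 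
      mul_le_of_le_one_left (hΨpos b hb').le (by linarith [(hωmem b hb').1])
  have e4 : 1 / 4 / (b : ℝ) ^ 2 = 1 / 8 / (b : ℝ) ^ 2 + 1 / 8 / (b : ℝ) ^ 2 := by ring
  linarith [hB b hb]

/-! ### Baire category argument -/

/-- **Theorem.** Suppose `q²Ψ(q) → 0`, `ω(q) → 0`, `q ↦ q²Ψ(q)` is non-increasing on `(0,∞)`,
`ω` maps `(0,∞)` into `(0,1)`, and `Ψ` satisfies the square divisibility condition.  If
`ω(q) ≥ (45/(16Ψ(q)))·Ψ(1/(8Ψ(q)))` for all sufficiently large `q`, then `E(Ψ,ω)` is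
non-empty; moreover it is uncountable. -/
theorem ESet_nonempty_uncountable_of_sqDiv (Ψ ω : ℝ → ℝ)
    (hΨpos : ∀ q : ℝ, 0 < q → 0 < Ψ q)
    (hωmem : ∀ q : ℝ, 0 < q → ω q ∈ Set.Ioo (0 : ℝ) 1)
    (hΨlim : Filter.Tendsto (fun q : ℝ => q ^ 2 * Ψ q) Filter.atTop (nhds 0))
    (hωlim : Filter.Tendsto ω Filter.atTop (nhds 0))
    (hmono : AntitoneOn (fun q : ℝ => q ^ 2 * Ψ q) (Set.Ioi 0))
    (hsq : SquareDivisibility Ψ)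
    (hbig : ∀ᶠ q : ℝ in Filter.atTop,
      45 / (16 * Ψ q) * Ψ (1 / (8 * Ψ q)) ≤ ω q) :
    (ESet Ψ ω).Nonempty ∧ ¬ (ESet Ψ ω).Countable := by
  suffices h : ¬ (ESet Ψ ω).Countable by
    refine ⟨?_, h⟩
    by_contra hne
    rw [Set.not_nonempty_iff_eq_empty] at hne
    exact h (hne ▸ Set.countable_empty)
  intro hcount
  obtain ⟨B, hB⟩ := eventually_small Ψ hΨlim (1 / 8) (by norm_num)
  obtain ⟨Q₁, hQ₁⟩ := Filter.eventually_atTop.mp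
    (tendsto_natCast_atTop_atTop.eventually hbig)
  obtain ⟨Q, hQ⟩ : ∃ Q : ℕ, Q = max 1 (max B Q₁) := ⟨_, rfl⟩
  have hQ1 : 1 ≤ Q := by omega
  have hstep := step Ψ ω hΨpos hωmem hΨlim hmono hsq Q hQ1 (fun q hq => hQ₁ q (by omega))
  have hne := robust_nonempty Ψ ω hΨpos hωmem Q hQ1 (fun b hb => hB b (by omega) (by omega))
  set S := Robust Ψ ω Q with hS
  have hclosed : IsClosed (closure S) := isClosed_closure
  have : CompleteSpace (closure S) := hclosed.completeSpace_coe
  have : Nonempty (closure S) := hne.closure.to_subtype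
  -- Density in `closure S` may be tested at points of `S`.
  have hdense : ∀ U : Set ℝ, (∀ z ∈ S, ∀ ε > 0, ∃ z' ∈ S, |z' - z| < ε ∧ z' ∈ U) →
      Dense ((↑) ⁻¹' U : Set (closure S)) := by
    intro U hU
    rw [Metric.dense_iff]
    rintro ⟨x, hx⟩ r hr
    obtain ⟨z, hzS, hz⟩ := Metric.mem_closure_iff.mp hx (r / 2) (by positivity)
    obtain ⟨z', hz'S, hz', hz'U⟩ := hU z hzS (r / 2) (by positivity)
    refine ⟨⟨z', subset_closure hz'S⟩, ?_, hz'U⟩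
    rw [Metric.mem_ball, Subtype.dist_eq]
    have h1 := dist_triangle z' z x
    rw [Real.dist_eq z' z] at h1
    rw [dist_comm] at hz
    change dist z' x < r
    linarith
  let U : ℕ → Set ℝ := fun m => ⋃ (p : ℤ) (q : ℕ) (_ : m ≤ q ∧ 0 < q), {x | |x - p / q| < Ψ q}
  have hUo : ∀ m, IsOpen (U m) := fun m =>
    isOpen_iUnion fun p => isOpen_iUnion fun q => isOpen_iUnion fun _ =>
      isOpen_lt (by fun_prop) continuous_const
  have hD1 : Dense (⋂ m, ((↑) ⁻¹' (U m) : Set (closure S))) := by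
    refine dense_iInter_of_isOpen (fun m => (hUo m).preimage continuous_subtype_val) fun m => ?_
    refine hdense _ fun z hz ε hε => ?_
    obtain ⟨z', hz', -, hlt, p, q, hq, hq0, h⟩ := hstep z hz ε hε m
    refine ⟨z', hz', hlt, ?_⟩
    simp only [U, Set.mem_iUnion]
    exact ⟨p, q, ⟨hq, hq0⟩, h⟩
  have hG1 : IsGδ (⋂ m, ((↑) ⁻¹' (U m) : Set (closure S))) :=
    .iInter_of_isOpen fun m => (hUo m).preimage continuous_subtype_val
  have hopen2 : ∀ e ∈ ESet Ψ ω, IsOpen ((↑) ⁻¹' ({e}ᶜ : Set ℝ) : Set (closure S)) :=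
    fun e _ => isOpen_compl_singleton.preimage continuous_subtype_val
  have hD2 : Dense (⋂ e ∈ ESet Ψ ω, ((↑) ⁻¹' ({e}ᶜ : Set ℝ) : Set (closure S))) := by
    refine dense_biInter_of_isOpen hopen2 hcount fun e _ => hdense _ fun z hz ε hε => ?_
    by_cases hze : z = e
    · obtain ⟨z', hz', hne', hlt, -⟩ := hstep z hz ε hε 0
      exact ⟨z', hz', hlt, by simpa [← hze] using hne'⟩
    · exact ⟨z, hz, by simpa using hε, by simpa using hze⟩
  have hG2 : IsGδ (⋂ e ∈ ESet Ψ ω, ((↑) ⁻¹' ({e}ᶜ : Set ℝ) : Set (closure S))) :=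
    .biInter_of_isOpen hcount hopen2
  obtain ⟨⟨x, hx⟩, hx1, hx2⟩ := (hD1.inter_of_Gδ hG1 hG2 hD2).nonempty
  simp only [Set.mem_iInter, Set.mem_preimage] at hx1 hx2
  refine hx2 x ⟨?_, Q, fun q hq p => ?_⟩ rfl
  · intro hfin
    obtain ⟨m, hm⟩ := (hfin.image Prod.snd).bddAbove
    have := hx1 (m + 1)
    simp only [U, Set.mem_iUnion] at this
    obtain ⟨p, q, ⟨hq, hq0⟩, h⟩ := this
    have : q ≤ m := hm ⟨(p, q), ⟨hq0, le_of_lt h⟩, rfl⟩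
    omega
  · have hcl : IsClosed {y : ℝ | (1 - ω (q : ℝ)) * Ψ (q : ℝ) ≤ |y - (p : ℝ) / (q : ℝ)|} :=
      isClosed_le continuous_const (by fun_prop)
    refine closure_minimal ?_ hcl hx
    rintro y ⟨η, hη, hy⟩
    have h1 := hy q hq p
    have h2 : 0 ≤ η / (q : ℝ) ^ 2 := by positivity
    rw [Set.mem_ofPred_eq]
    linarith
end

section
/- Let Ψ : (0,∞) → (0,∞) and suppose there exist functions d : (0,∞) → (0,∞) and e : (0,∞) → (0,∞) such that Ψ(q) = d(q)/e(q) for all q and d(q), e(q) ∈ ℕ for all q ∈ ℕ. If ω : (0,∞) → (0,∞) satisfies ω(q) < ((1 − ω(q·e(q)))/Ψ(q)) · Ψ(q·e(q)) for all sufficiently large q, then E(Ψ,ω) = ∅. -/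
/-!
If `x ∈ E(Ψ, ω)`, then `x` is `Ψ`-approximable with arbitrarily large denominators
(`WSet.exists_large_denominator`), so there is a large `q` and some `p` with
`(1 - ω q) Ψ q ≤ |x - p/q| ≤ Ψ q`.  Hence `x` lies within `ω q * Ψ q` of one of the two
endpoints `p/q ± Ψ q = p/q ± d q / e q`.  Such an endpoint is a rational number with denominator
`q * e q`, and the smallness assumption on `ω` says exactly that
`ω q * Ψ q < (1 - ω (q * e q)) * Ψ (q * e q)`.  So `x` is too close to a rational of
denominator `q * e q ≥ q`, contradicting membership in `E(Ψ, ω)`.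
-/

open Filter Set

/-- Each denominator admits only finitely many numerators, so infinitely many approximations force
unbounded denominators. -/
theorem WSet.exists_large_denominator {Ψ : ℝ → ℝ} {x : ℝ} (hx : x ∈ WSet Ψ) (N : ℕ) :
    ∃ (p : ℤ) (q : ℕ), 0 < q ∧ N ≤ q ∧ |x - (p : ℝ) / (q : ℝ)| ≤ Ψ (q : ℝ) := by
  by_contra! hcon
  refine hx (Set.Finite.subset (s := ⋃ q ∈ Finset.range N,
    (Set.Icc ⌈(q : ℝ) * (x - Ψ q)⌉ ⌊(q : ℝ) * (x + Ψ q)⌋) ×ˢ ({q} : Set ℕ)) ?_ ?_)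
  · exact Set.Finite.biUnion (Finset.finite_toSet _)
      fun q _ => (Set.finite_Icc _ _).prod (Set.finite_singleton q)
  · rintro ⟨p, q⟩ ⟨hq, hpq⟩
    simp only at hq hpq
    have hqN : q < N := by
      by_contra! h
      exact absurd hpq (not_le.mpr (hcon p q hq h))
    have hq' : (0 : ℝ) < q := by exact_mod_cast hq
    have hp : (q : ℝ) * ((p : ℝ) / q) = p := by field_simp
    obtain ⟨h1, h2⟩ := abs_le.mp hpq
    simp only [Set.mem_iUnion, Set.mem_prod, Set.mem_Icc, Set.mem_singleton_iff]
    refine ⟨q, Finset.mem_range.mpr hqN, ⟨Int.ceil_le.mpr ?_, Int.le_floor.mpr ?_⟩, rfl⟩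
    · rw [← hp]
      exact mul_le_mul_of_nonneg_left (by linarith) hq'.le
    · rw [← hp]
      exact mul_le_mul_of_nonneg_left (by linarith) hq'.le

/-- **Theorem.** Suppose `Ψ = d/e` on `(0,∞)` where `d(q), e(q)` are positive integers for
every `q ∈ ℕ`.  If `ω : (0,∞) → (0,∞)` satisfies
`ω(q) < ((1 − ω(q·e(q)))/Ψ(q))·Ψ(q·e(q))` for all sufficiently large `q`, then `E(Ψ,ω) = ∅`. -/
theorem ESet_eq_empty_of_rational (Ψ ω d e : ℝ → ℝ)
    (hΨpos : ∀ q : ℝ, 0 < q → 0 < Ψ q)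
    (hωpos : ∀ q : ℝ, 0 < q → 0 < ω q)
    (hdpos : ∀ q : ℝ, 0 < q → 0 < d q)
    (hepos : ∀ q : ℝ, 0 < q → 0 < e q)
    (hΨde : ∀ q : ℝ, 0 < q → Ψ q = d q / e q)
    (hdnat : ∀ q : ℕ, 0 < q → ∃ k : ℕ, d (q : ℝ) = (k : ℝ))
    (henat : ∀ q : ℕ, 0 < q → ∃ k : ℕ, e (q : ℝ) = (k : ℝ))
    (hsmall : ∀ᶠ q : ℝ in Filter.atTop,
      ω q < (1 - ω (q * e q)) / Ψ q * Ψ (q * e q)) :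
    ESet Ψ ω = ∅ := by
  rw [Set.eq_empty_iff_forall_notMem]
  rintro x ⟨hxW, Q, hQ⟩
  obtain ⟨M, hM⟩ := Filter.eventually_atTop.mp hsmall
  obtain ⟨p, q, hq, hNq, hpq⟩ := WSet.exists_large_denominator hxW (max Q ⌈M⌉₊)
  have hq' : (0 : ℝ) < q := by exact_mod_cast hq
  have hQq : Q ≤ q := (le_max_left _ _).trans hNq
  have hMq : M ≤ q := (Nat.le_ceil M).trans (by exact_mod_cast (le_max_right _ _).trans hNq)
  obtain ⟨k, hk⟩ := hdnat q hq
  obtain ⟨l, hl⟩ := henat q hq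
  have hl' : (0 : ℝ) < l := hl ▸ hepos q hq'
  have hl1 : 1 ≤ l := by exact_mod_cast hl'
  have hΨ : Ψ q = k / l := by rw [hΨde q hq', hk, hl]
  have hΨq := hΨpos q hq'
  have hω : ω q * Ψ q < (1 - ω (q * l)) * Ψ (q * l) := by
    have h := hM q hMq
    rwa [hl, div_mul_eq_mul_div, lt_div_iff₀ hΨq] at h
  have hlow := hQ q hQq p
  have hfar := hQ (q * l) (hQq.trans (Nat.le_mul_of_pos_right q hl1))
  push_cast at hfar
  rcases le_total 0 (x - (p : ℝ) / q) with hs | hs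
  · rw [abs_of_nonneg hs] at hpq hlow
    have hr := hfar (p * l + k * q)
    have hend : ((p * l + k * q : ℤ) : ℝ) / (q * l) = p / q + Ψ q := by
      rw [hΨ]; push_cast; field_simp
    rw [hend, abs_of_nonpos (by linarith)] at hr
    linarith
  · rw [abs_of_nonpos hs] at hpq hlow
    have hr := hfar (p * l - k * q)
    have hend : ((p * l - k * q : ℤ) : ℝ) / (q * l) = p / q - Ψ q := by
      rw [hΨ]; push_cast; field_simp
    rw [hend, abs_of_nonneg (by linarith)] at hr
    linarith
end

section
/- For any function ω : (0,∞) → (0,∞) and any real number τ > 2 there exists a non-increasing function Ψ : (0,∞) → (0,∞) such that lim_{q→∞} (−log Ψ(q))/log q = τ and E(Ψ,ω) ≠ ∅. -/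
/-!
The function `ω` plays no role: the inequality is proved with `ω = 0`.

Write `d q` for the distance from `x` to the nearest fraction of denominator `q`. Suppose `x`
satisfies `d q ≥ q ^ (-τ) / 12` for every `q ≥ 1` and `d q ≤ 2 * q ^ (-τ)` for infinitely many
`q` (`exists_exact_order`). Put `Ψ t = min (2 * t ^ (-τ)) (min_{1 ≤ i ≤ t} d i)`. This is
positive, non-increasing, of exact order `t ^ (-τ)`, and `Ψ q ≤ d q` for all `q`. Whenever
`d q ≤ 2 * q ^ (-τ)`, an index `k ≤ q` minimising `d` on `[1, q]` satisfies `Ψ k = d k`; as `d` is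
positive and `d q` gets arbitrarily small along such `q`, these `k` are unbounded, so `x ∈ W(Ψ)`.

To find `x`, Bezout's identity gives coprime pairs `(p n, q n)` with
`p (n+1) * q n - p n * q (n+1) = 1` and `q (n+1)` comparable to `(q n) ^ (τ - 1)`
(`exists_next`, `exists_fractions`). The fractions `p n / q n` increase to some `x` with
`0 ≤ x - p n / q n ≤ 2 / (q n * q (n+1))`, which is at most `2 * (q n) ^ (-τ)`. Conversely, if
`q n ≤ Q < q (n+1)`, then `P / Q` is at distance at least `1 / (Q * q (n+1))` from
`p (n+1) / q (n+1)`, whereas `x` is within half of that of `p (n+1) / q (n+1)`; hence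
`|x - P / Q| ≥ 1 / (2 * Q * q (n+1)) ≥ Q ^ (-τ) / 12`.
-/

open Filter Set

/-- A coprime pair `(p, q)` has a successor of determinant `1` whose denominator lies in a
prescribed interval of length `q`. -/
lemma exists_next_s7 (p q : ℤ) (hq : 0 < q) (h : IsCoprime p q) (T : ℝ) :
    ∃ p' q' : ℤ, p' * q - p * q' = 1 ∧ T ≤ (q' : ℝ) ∧ (q' : ℝ) ≤ T + q := by
  obtain ⟨u, v, huv⟩ := h
  have hqR : (0 : ℝ) < q := by exact_mod_cast hq
  refine ⟨v + ⌈(T + u) / q⌉ * p, -u + ⌈(T + u) / q⌉ * q, by linear_combination huv, ?_, ?_⟩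
  · have h1 := Int.le_ceil ((T + u) / (q : ℝ))
    rw [div_le_iff₀ hqR] at h1
    push_cast
    linarith
  · have h1 := (Int.ceil_lt_add_one ((T + u) / (q : ℝ))).le
    have h2 := mul_le_mul_of_nonneg_right h1 hqR.le
    rw [add_mul, div_mul_cancel₀ _ hqR.ne'] at h2
    push_cast
    linarith

lemma exists_fractions (τ : ℝ) (hτ : 2 < τ) :
    ∃ p q : ℕ → ℤ, q 0 = 1 ∧ (∀ n, 0 < q n) ∧ (∀ n, IsCoprime (p n) (q n)) ∧
      (∀ n, p (n + 1) * q n - p n * q (n + 1) = 1) ∧ (∀ n, 4 * q n ≤ q (n + 1)) ∧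
      (∀ n, (q n : ℝ) ^ (τ - 1) ≤ q (n + 1)) ∧
      (∀ n, (q (n + 1) : ℝ) ≤ 6 * (q n : ℝ) ^ (τ - 1)) := by
  have step : ∀ s : {s : ℤ × ℤ // 0 < s.2 ∧ IsCoprime s.1 s.2},
      ∃ s' : {s : ℤ × ℤ // 0 < s.2 ∧ IsCoprime s.1 s.2},
        s'.1.1 * s.1.2 - s.1.1 * s'.1.2 = 1 ∧ 4 * s.1.2 ≤ s'.1.2 ∧
        (s.1.2 : ℝ) ^ (τ - 1) ≤ s'.1.2 ∧ (s'.1.2 : ℝ) ≤ 6 * (s.1.2 : ℝ) ^ (τ - 1) := by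
    rintro ⟨⟨p, q⟩, hq, hpq⟩
    simp only at hq hpq
    obtain ⟨p', q', h1, h2, h3⟩ := exists_next_s7 p q hq hpq ((q : ℝ) ^ (τ - 1) + 4 * q)
    have hq1 : (1 : ℝ) ≤ q := by exact_mod_cast hq
    have hpow : (q : ℝ) ≤ (q : ℝ) ^ (τ - 1) := by
      simpa using Real.rpow_le_rpow_of_exponent_le hq1 (show (1 : ℝ) ≤ τ - 1 by linarith)
    have h4 : 4 * q ≤ q' := by
      have : (4 * q : ℝ) ≤ q' := by linarith
      exact_mod_cast this
    refine ⟨⟨(p', q'), by simp only; omega, q, -p, by simp only; linear_combination h1⟩,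
      h1, h4, ?_, ?_⟩
    · simp only; linarith
    · simp only; linarith
  choose f hf using step
  let s : ℕ → {s : ℤ × ℤ // 0 < s.2 ∧ IsCoprime s.1 s.2} :=
    fun n => f^[n] ⟨(0, 1), by norm_num, isCoprime_one_right⟩
  have hs : ∀ n, s (n + 1) = f (s n) := fun n => Function.iterate_succ_apply' _ _ _
  refine ⟨fun n => (s n).1.1, fun n => (s n).1.2, rfl, fun n => (s n).2.1, fun n => (s n).2.2,
    fun n => ?_, fun n => ?_, fun n => ?_, fun n => ?_⟩ <;> simp only [hs]
  exacts [(hf _).1, (hf _).2.1, (hf _).2.2.1, (hf _).2.2.2]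

/-- There is a real number approximable to order exactly `τ`, up to multiplicative constants. -/
lemma exists_exact_order (τ : ℝ) (hτ : 2 < τ) :
    ∃ x : ℝ, (∀ Q : ℕ, 0 < Q → ∀ P : ℤ, 1 / 12 * (Q : ℝ) ^ (-τ) ≤ |x - P / Q|) ∧
      ∀ N : ℕ, ∃ Q : ℕ, N < Q ∧ ∃ P : ℤ, |x - P / Q| ≤ 2 * (Q : ℝ) ^ (-τ) := by
  obtain ⟨p, q, h0, hpos, hcop, hdet, h4, hlo, hhi⟩ := exists_fractions τ hτ
  have hposR : ∀ n, (0 : ℝ) < q n := fun n => by exact_mod_cast hpos n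
  have h4R : ∀ n, (4 * q n : ℝ) ≤ q (n + 1) := fun n => by exact_mod_cast h4 n
  have hstep : ∀ n, (p (n + 1) : ℝ) / q (n + 1) = p n / q n + 1 / (q n * q (n + 1)) := fun n => by
    have h1 := (hposR n).ne'
    have h2 := (hposR (n + 1)).ne'
    have h3 : (p (n + 1) * q n - p n * q (n + 1) : ℝ) = 1 := by exact_mod_cast hdet n
    field_simp
    linarith
  have hmono : Monotone fun n => (p n : ℝ) / q n := monotone_nat_of_le_succ fun n => by
    have h1 := hposR n
    have h2 := hposR (n + 1)
    rw [hstep]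
    have : 0 < 1 / ((q n : ℝ) * q (n + 1)) := by positivity
    linarith
  have hanti : Antitone fun n => (p n : ℝ) / q n + 2 / (q n * q (n + 1)) :=
    antitone_nat_of_succ_le fun n => by
      have h1 := hposR n
      have h2 := hposR (n + 1)
      rw [hstep]
      have h3 : 2 / ((q (n + 1) : ℝ) * q (n + 1 + 1)) ≤ 1 / (q n * q (n + 1)) := by
        rw [div_le_div_iff₀ (mul_pos h2 (hposR _)) (mul_pos h1 h2)]
        have := h4R n
        have := h4R (n + 1)
        nlinarith
      have h5 : 2 / ((q n : ℝ) * q (n + 1)) = 1 / (q n * q (n + 1)) + 1 / (q n * q (n + 1)) := by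
        ring
      linarith
  have hmem := Monotone.ciSup_mem_iInter_Icc_of_antitone hmono hanti (fun n => by
    have : 0 < 2 / ((q n : ℝ) * q (n + 1)) := by
      have h1 := hposR n
      have h2 := hposR (n + 1)
      positivity
    simp only
    linarith)
  set x := ⨆ n, (p n : ℝ) / q n
  rw [Set.mem_iInter] at hmem
  have hx : ∀ n, |x - p n / q n| ≤ 2 / (q n * q (n + 1)) := fun n => by
    have := (hmem n).1
    have := (hmem n).2
    rw [abs_le]
    constructor <;> linarith
  have hunb : ∀ n : ℕ, (n : ℤ) < q n := fun n => by
    induction n with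
    | zero => simp [h0]
    | succ n ih => have := h4 n; push_cast; omega
  refine ⟨x, fun Q hQ P => ?_, fun N => ?_⟩
  · have hex : ∃ n, (Q : ℤ) < q n := ⟨Q, hunb Q⟩
    -- `q 0 = 1 ≤ Q`, so the first denominator exceeding `Q` has a predecessor.
    obtain ⟨n, hn1, hn2⟩ : ∃ n, q n ≤ Q ∧ (Q : ℤ) < q (n + 1) := by
      classical
      have hf := Nat.find_spec hex
      have hm := fun m => @Nat.find_min _ _ hex m
      rcases hk : Nat.find hex with _ | n
      · rw [hk, h0] at hf; omega
      · exact ⟨n, not_lt.1 (hm n (by omega)), hk ▸ hf⟩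
    have hQR : (0 : ℝ) < Q := by exact_mod_cast hQ
    have hq1 := hposR (n + 1)
    have hq2 := hposR (n + 2)
    have hn1R : (q n : ℝ) ≤ Q := by exact_mod_cast hn1
    have hn2R : (Q : ℝ) < q (n + 1) := by exact_mod_cast hn2
    have hne : p (n + 1) * Q - P * q (n + 1) ≠ 0 := fun h => by
      have hdvd : q (n + 1) ∣ p (n + 1) * Q := ⟨P, by linarith⟩
      have := Int.le_of_dvd (by omega) ((hcop (n + 1)).symm.dvd_of_dvd_mul_left hdvd)
      omega
    have hfar : 1 / ((Q : ℝ) * q (n + 1)) ≤ |(p (n + 1) : ℝ) / q (n + 1) - P / Q| := by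
      have h1 : (1 : ℝ) ≤ |(p (n + 1) * Q - P * q (n + 1) : ℝ)| := by
        exact_mod_cast Int.one_le_abs hne
      have h2 : (p (n + 1) : ℝ) / q (n + 1) - P / Q
          = (p (n + 1) * Q - P * q (n + 1)) / (Q * q (n + 1)) := by
        field_simp
      rw [h2, abs_div, abs_of_pos (mul_pos hQR hq1)]
      gcongr
    have hclose : |x - p (n + 1) / q (n + 1)| ≤ 1 / (2 * ((Q : ℝ) * q (n + 1))) := by
      refine (hx (n + 1)).trans ?_
      rw [div_le_div_iff₀ (by positivity) (by positivity)]
      have := h4R (n + 1)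
      nlinarith
    have htri := abs_sub_le ((p (n + 1) : ℝ) / q (n + 1)) x (P / Q)
    rw [abs_sub_comm _ x] at htri
    have hhalf : 1 / ((Q : ℝ) * q (n + 1))
        = 1 / (2 * ((Q : ℝ) * q (n + 1))) + 1 / (2 * ((Q : ℝ) * q (n + 1))) := by
      field_simp; norm_num
    have hmain : 1 / (2 * ((Q : ℝ) * q (n + 1))) ≤ |x - P / Q| := by linarith
    refine le_trans ?_ hmain
    have hup : (q (n + 1) : ℝ) ≤ 6 * (Q : ℝ) ^ (τ - 1) := by
      refine (hhi n).trans ?_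
      have := Real.rpow_le_rpow (hposR n).le hn1R (show 0 ≤ τ - 1 by linarith)
      linarith
    have hpw : (Q : ℝ) ^ τ = Q * (Q : ℝ) ^ (τ - 1) := by
      rw [Real.rpow_sub_one hQR.ne']; field_simp
    have hpp : 0 < (Q : ℝ) ^ τ := Real.rpow_pos_of_pos hQR _
    rw [Real.rpow_neg hQR.le, ← one_div, div_mul_div_comm, one_mul]
    apply one_div_le_one_div_of_le (by positivity)
    rw [hpw]
    nlinarith
  · have hN := hunb N
    have hcast : (((q N).toNat : ℕ) : ℤ) = q N := Int.toNat_of_nonneg (hpos N).le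
    have hcastR : (((q N).toNat : ℕ) : ℝ) = q N := by exact_mod_cast hcast
    refine ⟨(q N).toNat, by omega, p N, ?_⟩
    rw [hcastR]
    refine (hx N).trans ?_
    have h1 := hposR N
    have hpw : (q N : ℝ) ^ τ = q N * (q N : ℝ) ^ (τ - 1) := by
      rw [Real.rpow_sub_one h1.ne']; field_simp
    have hpp : 0 < (q N : ℝ) ^ τ := Real.rpow_pos_of_pos h1 _
    rw [Real.rpow_neg h1.le, ← div_eq_mul_inv]
    apply div_le_div_of_nonneg_left (by norm_num) hpp
    rw [hpw]
    exact mul_le_mul_of_nonneg_left (hlo N) h1.le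

lemma tendsto_order_of_bounds (τ : ℝ) (Ψ : ℝ → ℝ)
    (hlo : ∀ t : ℝ, 1 ≤ t → 1 / 12 * t ^ (-τ) ≤ Ψ t) (hhi : ∀ t : ℝ, 1 ≤ t → Ψ t ≤ 2 * t ^ (-τ)) :
    Tendsto (fun t : ℝ => -Real.log (Ψ t) / Real.log t) atTop (nhds τ) := by
  have key : ∀ c : ℝ, 0 < c → ∀ t : ℝ, 1 < t →
      -Real.log (c * t ^ (-τ)) / Real.log t = τ - Real.log c / Real.log t := fun c hc t ht => by
    have ht0 : 0 < t := by linarith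
    have := Real.log_pos ht
    rw [Real.log_mul hc.ne' (Real.rpow_pos_of_pos ht0 _).ne', Real.log_rpow ht0]
    field_simp
    ring
  have lim : ∀ c : ℝ, Tendsto (fun t : ℝ => τ - Real.log c / Real.log t) atTop (nhds τ) :=
    fun c => by
      simpa using tendsto_const_nhds.sub (Real.tendsto_log_atTop.const_div_atTop (Real.log c))
  refine tendsto_of_tendsto_of_tendsto_of_le_of_le' (lim 2) (lim (1 / 12)) ?_ ?_
  all_goals
    filter_upwards [eventually_gt_atTop 1] with t ht
    have ht0 : 0 < t ^ (-τ) := Real.rpow_pos_of_pos (by linarith) _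
    have hlog := Real.log_pos ht
    have h1 := hlo t ht.le
    have h2 := hhi t ht.le
    rw [← key _ (by norm_num) t ht]
    apply div_le_div_of_nonneg_right _ hlog.le
    apply neg_le_neg
    apply Real.log_le_log _ (by assumption)
    nlinarith

/-- Distance from `x` to the nearest fraction with denominator `max i 1`; the `max` turns the
meaningless denominator `0` into `1`. -/
noncomputable def fracDist (x : ℝ) (i : ℕ) : ℝ :=
  |x - (round (((max i 1 : ℕ) : ℝ) * x) : ℤ) / ((max i 1 : ℕ) : ℝ)|

lemma fracDist_le (x : ℝ) (q : ℕ) (hq : 0 < q) (p : ℤ) : fracDist x q ≤ |x - p / q| := by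
  have hqR : (0 : ℝ) < q := by exact_mod_cast hq
  have key : ∀ z : ℤ, |x - z / q| = |q * x - z| / q := fun z => by
    rw [← abs_of_pos hqR, ← abs_div, abs_of_pos hqR]
    congr 1
    field_simp
  rw [fracDist, max_eq_left (by omega : 1 ≤ q), key, key]
  exact div_le_div_of_nonneg_right (round_le _ _) hqR.le

/-- The minimum of the distances from `x` to fractions of denominator between `1` and
`max N 1`. -/
noncomputable def minDist (x : ℝ) (N : ℕ) : ℝ :=
  (Finset.range (N + 1)).inf' Finset.nonempty_range_add_one (fracDist x)

lemma minDist_le (x : ℝ) {i N : ℕ} (h : i ≤ N) : minDist x N ≤ fracDist x i :=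
  Finset.inf'_le _ (by simp; omega)

lemma minDist_anti (x : ℝ) : Antitone (minDist x) := fun a b h =>
  Finset.inf'_mono _ (by intro i; simp; omega) _

lemma exists_minDist_eq (x : ℝ) (N : ℕ) : ∃ i ≤ N, minDist x N = fracDist x i := by
  obtain ⟨i, hi, h⟩ := Finset.exists_mem_eq_inf' (s := Finset.range (N + 1))
    Finset.nonempty_range_add_one (fracDist x)
  exact ⟨i, by simp at hi; omega, h⟩

/-- **Theorem.** For any `ω : (0,∞) → (0,∞)` and any `τ > 2` there exists a non-increasing
`Ψ : (0,∞) → (0,∞)` with `(−log Ψ(q))/log q → τ` as `q → ∞` and `E(Ψ,ω) ≠ ∅`. -/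
theorem exists_Psi_ESet_nonempty (ω : ℝ → ℝ) (hω : ∀ q : ℝ, 0 < q → 0 < ω q)
    (τ : ℝ) (hτ : 2 < τ) :
    ∃ Ψ : ℝ → ℝ, (∀ q : ℝ, 0 < q → 0 < Ψ q) ∧ AntitoneOn Ψ (Set.Ioi 0) ∧
      Filter.Tendsto (fun q : ℝ => -Real.log (Ψ q) / Real.log q) Filter.atTop (nhds τ) ∧
      (ESet Ψ ω).Nonempty := by
  obtain ⟨x, hlow, hinf⟩ := exists_exact_order τ hτ
  have hd : ∀ i : ℕ, 1 / 12 * ((max i 1 : ℕ) : ℝ) ^ (-τ) ≤ fracDist x i := fun i =>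
    hlow (max i 1) (by omega) _
  have hdpos : ∀ i : ℕ, 0 < fracDist x i := fun i => by
    have h1 : (0 : ℝ) < ((max i 1 : ℕ) : ℝ) := by exact_mod_cast (by omega : 0 < max i 1)
    have := Real.rpow_pos_of_pos h1 (-τ)
    linarith [hd i]
  have hmpos : ∀ N, 0 < minDist x N := fun N => by
    obtain ⟨i, -, h⟩ := exists_minDist_eq x N
    exact h ▸ hdpos i
  have hpow : ∀ s t : ℝ, 0 < s → s ≤ t → t ^ (-τ) ≤ s ^ (-τ) := fun s t hs h =>
    Real.rpow_le_rpow_of_nonpos hs h (by linarith)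
  let Ψ : ℝ → ℝ := fun t => min (2 * t ^ (-τ)) (minDist x ⌊t⌋₊)
  have hΨpos : ∀ q : ℝ, 0 < q → 0 < Ψ q := fun q hq =>
    lt_min (by have := Real.rpow_pos_of_pos hq (-τ); linarith) (hmpos _)
  refine ⟨Ψ, hΨpos, ?_, ?_, x, ?_, 1, ?_⟩
  · intro s hs t ht hst
    exact min_le_min (by have := hpow s t hs hst; linarith) (minDist_anti x (Nat.floor_mono hst))
  · refine tendsto_order_of_bounds τ Ψ (fun t ht => le_min ?_ ?_) (fun t _ => min_le_left _ _)
    · have := Real.rpow_pos_of_pos (show 0 < t by linarith) (-τ)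
      linarith
    · obtain ⟨i, hi, h⟩ := exists_minDist_eq x ⌊t⌋₊
      rw [h]
      refine le_trans ?_ (hd i)
      have h1 : ((max i 1 : ℕ) : ℝ) ≤ t := by
        have : (i : ℝ) ≤ t := (Nat.le_floor_iff (by linarith)).1 hi
        push_cast
        exact max_le this ht
      have h0 : (0 : ℝ) < ((max i 1 : ℕ) : ℝ) := by exact_mod_cast (by omega : 0 < max i 1)
      have := hpow _ _ h0 h1
      linarith
  · -- Equality `Ψ k = fracDist x k` holds for arbitrarily large `k`.
    have hrec : ∀ N : ℕ, ∃ k : ℕ, N < k ∧ fracDist x k ≤ Ψ k := fun N => by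
      have hlim : Tendsto (fun n : ℕ => 2 * (n : ℝ) ^ (-τ)) atTop (nhds 0) := by
        simpa using ((tendsto_rpow_neg_atTop (by linarith : 0 < τ)).comp
          tendsto_natCast_atTop_atTop).const_mul 2
      obtain ⟨M, hM⟩ := eventually_atTop.1 (hlim.eventually_lt_const (hmpos N))
      obtain ⟨Q, hQ, P, hP⟩ := hinf M
      have hQ0 : 0 < Q := by omega
      obtain ⟨k, hk, hkm⟩ := exists_minDist_eq x Q
      have h1 : fracDist x k ≤ 2 * (Q : ℝ) ^ (-τ) := by
        rw [← hkm]
        exact (minDist_le x le_rfl).trans ((fracDist_le x Q hQ0 P).trans hP)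
      have hNk : N < k := by
        by_contra! hcon
        linarith [minDist_le x hcon, hM Q hQ.le]
      refine ⟨k, hNk, le_min (h1.trans ?_) ?_⟩
      · have := hpow k Q (by exact_mod_cast (by omega : 0 < k)) (by exact_mod_cast hk)
        linarith
      · rw [Nat.floor_natCast, ← hkm]
        exact minDist_anti x hk
    refine Set.Infinite.of_image Prod.snd (Set.infinite_of_forall_exists_gt fun N => ?_)
    obtain ⟨k, hNk, hk⟩ := hrec N
    refine ⟨k, ⟨(round ((k : ℝ) * x), k), ⟨by simp only; omega, ?_⟩, rfl⟩, hNk⟩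
    rw [fracDist, max_eq_left (by omega : 1 ≤ k)] at hk
    exact hk
  · intro q hq p
    have hqR : (0 : ℝ) < q := by exact_mod_cast hq
    have h1 : Ψ q ≤ |x - p / q| := by
      refine (min_le_right _ _).trans ?_
      rw [Nat.floor_natCast]
      exact (minDist_le x le_rfl).trans (fracDist_le x q hq p)
    nlinarith [hω q hqR, hΨpos q hqR]
end
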